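/- arXiv:1111.1453 — 13 statements merged into one kernel-verified Lean document; each statement's English description precedes it below -/
import Mathlib

section
/- Let (Ω, 𝒜, μ) be a probability space, J an interval of reals, and W : Ω → J a measurable random variable. Let g₁, g₂ : J → ℝ be nondecreasing functions such that g₁ single crosses g₂ from below at some w₀ ∈ J, and let h : ℝ → ℝ be concave. Assume g₁∘W, g₂∘W, h∘g₁∘W and h∘g₂∘W are all integrable. If E[g₁(W)] = E[g₂(W)], then E[h(g₁(W))] ≤ E[h(g₂(W))]. -/
open MeasureTheory

/-!
Since `g₁` and `g₂` agree at the crossing point, monotonicity puts `g₂ (W ω)` between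
`c = g₂ w₀` and `g₁ (W ω)` for every `ω`. Subtract from `h` a supporting line at `c`: the resulting
concave function is maximal at `c`, hence decreases along the segment from `c` to `g₁ (W ω)`, and
the subtracted line contributes equally to both expectations because the means agree.
A supporting line may fail to exist only when `c` is not interior to the domain of `h`; then every
`g₁ (W ω)` lies on the same side of `c`, so equal means force `g₁ ∘ W = g₂ ∘ W` almost everywhere.
-/

lemma exists_isMaxOn_sub_mul_of_mem_interior {S : Set ℝ} {h : ℝ → ℝ} {c : ℝ}
    (hh : ConcaveOn ℝ S h) (hc : c ∈ interior S) :
    ∃ s : ℝ, IsMaxOn (fun x ↦ h x - s * x) S c := by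
  set m := derivWithin (-h) (Set.Ioi c) c
  have hconv : ConvexOn ℝ S (fun x ↦ (-h) x - m * x) :=
    hh.neg.sub ((LinearMap.mulLeft ℝ m).concaveOn hh.1)
  have hderiv : derivWithin (fun x ↦ (-h) x - m * x) (Set.Ioi c) c = 0 := by
    have hline : HasDerivWithinAt (fun x ↦ m * x) m (Set.Ioi c) c :=
      (hasDerivAt_const_mul m).hasDerivWithinAt
    have hsub := (hh.neg.hasDerivWithinAt_rightDeriv_of_mem_interior hc).sub hline
    rw [sub_self] at hsub
    exact hsub.derivWithin (uniqueDiffWithinAt_Ioi c)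
  refine ⟨-m, fun x hx ↦ ?_⟩
  have hmin : (-h) c - m * c ≤ (-h) x - m * x := hconv.isMinOn_of_rightDeriv_eq_zero hc hderiv hx
  simp only [Pi.neg_apply] at hmin
  change h x - -m * x ≤ h c - -m * c
  linarith

lemma subset_Iic_or_subset_Ici_of_notMem_interior {α : Type*} [LinearOrder α]
    [TopologicalSpace α] [OrderClosedTopology α] {S : Set α} {c : α} (hS : S.OrdConnected)
    (hc : c ∉ interior S) : S ⊆ Set.Iic c ∨ S ⊆ Set.Ici c := by
  contrapose! hc
  obtain ⟨⟨b, hbS, hcb⟩, a, haS, hac⟩ := hc.imp Set.not_subset.mp Set.not_subset.mp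
  have hab : Set.Icc a b ⊆ S := hS.out haS hbS
  exact mem_interior_iff_mem_nhds.mpr <|
    Filter.mem_of_superset (Icc_mem_nhds (not_le.mp hac) (not_le.mp hcb)) hab

section Spread

variable {Ω : Type*} [MeasurableSpace Ω] {μ : Measure Ω} {X Y : Ω → ℝ} {S : Set ℝ} {c : ℝ}

lemma ae_eq_of_mem_uIcc_of_notMem_interior (hS : S.OrdConnected) (hc : c ∉ interior S)
    (hXS : ∀ᵐ ω ∂μ, X ω ∈ S) (hY : ∀ᵐ ω ∂μ, Y ω ∈ Set.uIcc c (X ω))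
    (hXint : Integrable X μ) (hYint : Integrable Y μ) (hmean : ∫ ω, X ω ∂μ = ∫ ω, Y ω ∂μ) :
    X =ᵐ[μ] Y := by
  rcases subset_Iic_or_subset_Ici_of_notMem_interior hS hc with hle | hge
  · have hXY : X ≤ᵐ[μ] Y := by
      filter_upwards [hXS, hY] with ω hX hYω
      exact (Set.uIcc_of_ge (Set.mem_Iic.mp (hle hX)) ▸ hYω).1
    exact (integral_eq_iff_of_ae_le hXint hYint hXY).mp hmean
  · have hYX : Y ≤ᵐ[μ] X := by
      filter_upwards [hXS, hY] with ω hX hYω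
      exact (Set.uIcc_of_le (Set.mem_Ici.mp (hge hX)) ▸ hYω).2
    exact ((integral_eq_iff_of_ae_le hYint hXint hYX).mp hmean.symm).symm

theorem integral_comp_le_integral_comp_of_mem_uIcc {h : ℝ → ℝ} (hh : ConcaveOn ℝ S h)
    (hXS : ∀ᵐ ω ∂μ, X ω ∈ S) (hY : ∀ᵐ ω ∂μ, Y ω ∈ Set.uIcc c (X ω))
    (hXint : Integrable X μ) (hYint : Integrable Y μ)
    (hhX : Integrable (fun ω ↦ h (X ω)) μ) (hhY : Integrable (fun ω ↦ h (Y ω)) μ)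
    (hmean : ∫ ω, X ω ∂μ = ∫ ω, Y ω ∂μ) :
    ∫ ω, h (X ω) ∂μ ≤ ∫ ω, h (Y ω) ∂μ := by
  by_cases hc : c ∈ interior S
  · obtain ⟨s, hmax⟩ := exists_isMaxOn_sub_mul_of_mem_interior hh hc
    have hconc : ConcaveOn ℝ S (fun x ↦ h x - s * x) :=
      hh.sub ((LinearMap.mulLeft ℝ s).convexOn hh.1)
    have hle : ∀ᵐ ω ∂μ, h (X ω) - s * X ω ≤ h (Y ω) - s * Y ω := by
      filter_upwards [hXS, hY] with ω hX hYω
      rw [← segment_eq_uIcc] at hYω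
      exact (min_eq_right (hmax hX)).ge.trans
        (hconc.ge_on_segment (interior_subset hc) hX hYω)
    have hint := integral_mono_ae (hhX.sub (hXint.const_mul s)) (hhY.sub (hYint.const_mul s)) hle
    simp only [Pi.sub_apply] at hint
    rwa [integral_sub hhX (hXint.const_mul s), integral_sub hhY (hYint.const_mul s),
      integral_const_mul, integral_const_mul, hmean, sub_le_sub_iff_right] at hint
  · have hXY := ae_eq_of_mem_uIcc_of_notMem_interior hh.1.ordConnected hc hXS hY hXint hYint hmean
    exact (integral_congr_ae (hXY.fun_comp h)).le

end Spread

lemma mem_uIcc_of_single_crossing {α β : Type*} [LinearOrder α] [Lattice β] {J : Set α}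
    {g₁ g₂ : α → β} {w₀ w : α} (hg₂ : MonotoneOn g₂ J) (hw₀ : w₀ ∈ J)
    (hcross₁ : ∀ w ∈ J, w ≤ w₀ → g₁ w ≤ g₂ w) (hcross₂ : ∀ w ∈ J, w₀ ≤ w → g₂ w ≤ g₁ w)
    (hw : w ∈ J) : g₂ w ∈ Set.uIcc (g₂ w₀) (g₁ w) := by
  rcases le_total w w₀ with hle | hge
  · exact Set.mem_uIcc_of_ge (hcross₁ w hw hle) (hg₂ hw hw₀ hle)
  · exact Set.mem_uIcc_of_le (hg₂ hw₀ hw hge) (hcross₂ w hw hge)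

theorem ohlin_part_one_general {Ω α : Type*} [MeasurableSpace Ω] [LinearOrder α] {μ : Measure Ω}
    {J : Set α} {W : Ω → α} (hWJ : ∀ᵐ ω ∂μ, W ω ∈ J)
    {g₁ g₂ : α → ℝ} (hg₂ : MonotoneOn g₂ J) {w₀ : α} (hw₀ : w₀ ∈ J)
    (hcross₁ : ∀ w ∈ J, w ≤ w₀ → g₁ w ≤ g₂ w) (hcross₂ : ∀ w ∈ J, w₀ ≤ w → g₂ w ≤ g₁ w)
    {S : Set ℝ} (hg₁S : Set.MapsTo g₁ J S) {h : ℝ → ℝ} (hconc : ConcaveOn ℝ S h)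
    (hint₁ : Integrable (fun ω ↦ g₁ (W ω)) μ) (hint₂ : Integrable (fun ω ↦ g₂ (W ω)) μ)
    (hint₃ : Integrable (fun ω ↦ h (g₁ (W ω))) μ) (hint₄ : Integrable (fun ω ↦ h (g₂ (W ω))) μ)
    (heq : ∫ ω, g₁ (W ω) ∂μ = ∫ ω, g₂ (W ω) ∂μ) :
    ∫ ω, h (g₁ (W ω)) ∂μ ≤ ∫ ω, h (g₂ (W ω)) ∂μ :=
  integral_comp_le_integral_comp_of_mem_uIcc hconc (hWJ.mono fun _ hω ↦ hg₁S hω)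
    (hWJ.mono fun _ hω ↦ mem_uIcc_of_single_crossing hg₂ hw₀ hcross₁ hcross₂ hω)
    hint₁ hint₂ hint₃ hint₄ heq

/-- Ohlin's lemma, part 1: if `g₁` single crosses `g₂` from below (both nondecreasing on the
interval `J`), `h` is concave, and `E[g₁(W)] = E[g₂(W)]`, then
`E[h(g₁(W))] ≤ E[h(g₂(W))]`. -/
theorem ohlin_part_one
    {Ω : Type*} [MeasurableSpace Ω] (μ : Measure Ω) [IsProbabilityMeasure μ]
    (J : Set ℝ) (hJ : J.OrdConnected)
    (W : Ω → ℝ) (hWmeas : Measurable W) (hWJ : ∀ ω, W ω ∈ J)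
    (g₁ g₂ : ℝ → ℝ) (hg₁ : MonotoneOn g₁ J) (hg₂ : MonotoneOn g₂ J)
    (w₀ : ℝ) (hw₀ : w₀ ∈ J)
    (hcross₁ : ∀ w ∈ J, w ≤ w₀ → g₁ w ≤ g₂ w)
    (hcross₂ : ∀ w ∈ J, w₀ ≤ w → g₂ w ≤ g₁ w)
    (h : ℝ → ℝ) (hconc : ConcaveOn ℝ Set.univ h)
    (hint₁ : Integrable (fun ω => g₁ (W ω)) μ)
    (hint₂ : Integrable (fun ω => g₂ (W ω)) μ)
    (hint₃ : Integrable (fun ω => h (g₁ (W ω))) μ)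
    (hint₄ : Integrable (fun ω => h (g₂ (W ω))) μ)
    (heq : ∫ ω, g₁ (W ω) ∂μ = ∫ ω, g₂ (W ω) ∂μ) :
    ∫ ω, h (g₁ (W ω)) ∂μ ≤ ∫ ω, h (g₂ (W ω)) ∂μ :=
  ohlin_part_one_general (.of_forall hWJ) hg₂ hw₀ hcross₁ hcross₂ (Set.mapsTo_univ g₁ J) hconc
    hint₁ hint₂ hint₃ hint₄ heq
end

section
/- Let (Ω, 𝒜, μ) be a probability space, J an interval of reals, and W : Ω → J a measurable random variable. Let g₁, g₂ : J → ℝ be nondecreasing functions such that g₁ single crosses g₂ from below at some w₀ ∈ J, and let h : ℝ → ℝ be concave. Assume g₁∘W, g₂∘W, h∘g₁∘W and h∘g₂∘W are all integrable. If E[h(g₁(W))] = E[h(g₂(W))] and the right derivative of h at the point g₁(w₀) is strictly positive, then E[g₁(W)] ≥ E[g₂(W)]. -/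
open MeasureTheory

/-!
At a crossing point `w₀` the two functions agree, so monotonicity of `g₂` places `g₂ w` between
`a = g₁ w₀` and `g₁ w` on either side of `w₀`. If `c` is a supergradient of `h` at `a`, the chord
of `h` from `a` to `g₁ w` has slope at most `c` when `g₁ w` lies to the right of `a` and at least
`c` when it lies to the left; moving the base point from `a` towards `g₁ w` only strengthens this,
so `h (g₁ w) - h (g₂ w) ≤ c (g₁ w - g₂ w)`. It remains to integrate and divide by `c > 0`; the
right derivative of `h` at `a` is one such `c`.
-/

section Supergradient

variable {E : Type*} [AddCommGroup E] [Module ℝ E] {s : Set E} {f : E → ℝ} {φ : E →ₗ[ℝ] ℝ}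
  {a x y : E}

/-- The linear functional `φ` is a supergradient of `f` at `a` relative to `s`: the affine function
through `(a, f a)` with linear part `φ` lies above `f` on `s`. It stands in for the derivative of a
concave function where that need not exist. -/
def IsSupergradientOn (f : E → ℝ) (s : Set E) (φ : E →ₗ[ℝ] ℝ) (a : E) : Prop :=
  ∀ x ∈ s, f x - f a ≤ φ (x - a)

lemma IsSupergradientOn.sub_le_map_sub_of_mem_segment (hφ : IsSupergradientOn f s φ a)
    (hf : ConcaveOn ℝ s f) (ha : a ∈ s) (hx : x ∈ s) (hy : y ∈ segment ℝ a x) :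
    f x - f y ≤ φ (x - y) := by
  obtain ⟨r, t, hr, ht, hrt, rfl⟩ := hy
  have hconc : r * f a + t * f x ≤ f (r • a + t • x) := hf.2 ha hx hr ht hrt
  have hsub : x - (r • a + t • x) = r • (x - a) := by
    rw [← eq_sub_iff_add_eq] at hrt
    subst hrt
    module
  calc f x - f (r • a + t • x) ≤ f x - (r * f a + t * f x) := by gcongr
    _ = r * (f x - f a) := by linear_combination -f x * hrt
    _ ≤ r * φ (x - a) := by gcongr; exact hφ x hx
    _ = φ (x - (r • a + t • x)) := by rw [hsub, map_smul, smul_eq_mul]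

lemma IsSupergradientOn.integral_sub_le_integral_map_sub {Ω : Type*} [MeasurableSpace Ω]
    {μ : Measure Ω} {X Y : Ω → E} (hφ : IsSupergradientOn f s φ a) (hf : ConcaveOn ℝ s f)
    (ha : a ∈ s) (hX : ∀ᵐ ω ∂μ, X ω ∈ s) (hY : ∀ᵐ ω ∂μ, Y ω ∈ segment ℝ a (X ω))
    (hfX : Integrable (fun ω => f (X ω)) μ) (hfY : Integrable (fun ω => f (Y ω)) μ)
    (hφXY : Integrable (fun ω => φ (X ω - Y ω)) μ) :
    ∫ ω, f (X ω) ∂μ - ∫ ω, f (Y ω) ∂μ ≤ ∫ ω, φ (X ω - Y ω) ∂μ := by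
  rw [← integral_sub hfX hfY]
  refine integral_mono_ae (hfX.sub hfY) hφXY ?_
  filter_upwards [hX, hY] with ω hXω hYω
  exact hφ.sub_le_map_sub_of_mem_segment hf ha hXω hYω

end Supergradient

lemma isSupergradientOn_rightDeriv {s : Set ℝ} {f : ℝ → ℝ} {a : ℝ} (hf : ConcaveOn ℝ s f)
    (ha : a ∈ interior s) :
    IsSupergradientOn f s (LinearMap.mulLeft ℝ (derivWithin f (Set.Ioi a) a)) a := by
  intro x hx
  have hneg : derivWithin (-f) (Set.Ioi a) a = -derivWithin f (Set.Ioi a) a := derivWithin.neg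
  rw [LinearMap.mulLeft_apply]
  rcases lt_trichotomy x a with hxa | rfl | hax
  · have hslope : slope (-f) x a ≤ -derivWithin f (Set.Ioi a) a :=
      hneg ▸ (hf.neg.slope_le_leftDeriv_of_mem_interior hx ha hxa).trans
        (hf.neg.leftDeriv_le_rightDeriv_of_mem_interior ha)
    rw [slope_def_field, div_le_iff₀ (sub_pos.2 hxa), Pi.neg_apply, Pi.neg_apply] at hslope
    linarith
  · simp
  · have hslope : -derivWithin f (Set.Ioi a) a ≤ slope (-f) a x :=
      hneg ▸ hf.neg.rightDeriv_le_slope_of_mem_interior ha hx hax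
    rw [slope_def_field, le_div_iff₀ (sub_pos.2 hax), Pi.neg_apply, Pi.neg_apply] at hslope
    linarith

/-- `g₁` single crosses `g₂` from below on `J` at the point `w₀` of `J`: the condition under
which the expectations of `g₁` and `g₂` are compared. -/
structure SingleCrossesFromBelowOn {α β : Type*} [LE α] [LE β] (g₁ g₂ : α → β) (J : Set α)
    (w₀ : α) : Prop where
  mem : w₀ ∈ J
  le_of_le : ∀ w ∈ J, w ≤ w₀ → g₁ w ≤ g₂ w
  ge_of_ge : ∀ w ∈ J, w₀ ≤ w → g₂ w ≤ g₁ w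

namespace SingleCrossesFromBelowOn

lemma apply_eq {α β : Type*} [Preorder α] [PartialOrder β] {g₁ g₂ : α → β} {J : Set α} {w₀ : α}
    (hcross : SingleCrossesFromBelowOn g₁ g₂ J w₀) : g₁ w₀ = g₂ w₀ :=
  le_antisymm (hcross.le_of_le w₀ hcross.mem le_rfl) (hcross.ge_of_ge w₀ hcross.mem le_rfl)

lemma apply_mem_uIcc {α β : Type*} [LinearOrder α] [Lattice β] {g₁ g₂ : α → β} {J : Set α}
    {w₀ w : α} (hcross : SingleCrossesFromBelowOn g₁ g₂ J w₀) (hg₂ : MonotoneOn g₂ J)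
    (hw : w ∈ J) : g₂ w ∈ Set.uIcc (g₁ w₀) (g₁ w) := by
  rw [hcross.apply_eq]
  rcases le_total w w₀ with hle | hge
  · exact Set.mem_uIcc_of_ge (hcross.le_of_le w hw hle) (hg₂ hw hcross.mem hle)
  · exact Set.mem_uIcc_of_le (hg₂ hcross.mem hw hge) (hcross.ge_of_ge w hw hge)

end SingleCrossesFromBelowOn

theorem ohlin_part_two_general {Ω α : Type*} [MeasurableSpace Ω] [LinearOrder α] {μ : Measure Ω}
    {J : Set α} {W : Ω → α} {g₁ g₂ : α → ℝ} {w₀ : α} {s : Set ℝ} {h : ℝ → ℝ} {c : ℝ}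
    (hWJ : ∀ᵐ ω ∂μ, W ω ∈ J) (hg₁ : Set.MapsTo g₁ J s) (hg₂ : MonotoneOn g₂ J)
    (hcross : SingleCrossesFromBelowOn g₁ g₂ J w₀) (hconc : ConcaveOn ℝ s h)
    (hc : 0 < c) (hsuper : IsSupergradientOn h s (LinearMap.mulLeft ℝ c) (g₁ w₀))
    (hint₁ : Integrable (fun ω => g₁ (W ω)) μ) (hint₂ : Integrable (fun ω => g₂ (W ω)) μ)
    (hint₃ : Integrable (fun ω => h (g₁ (W ω))) μ) (hint₄ : Integrable (fun ω => h (g₂ (W ω))) μ)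
    (hle : ∫ ω, h (g₂ (W ω)) ∂μ ≤ ∫ ω, h (g₁ (W ω)) ∂μ) :
    ∫ ω, g₂ (W ω) ∂μ ≤ ∫ ω, g₁ (W ω) ∂μ := by
  have hbetween : ∀ᵐ ω ∂μ, g₂ (W ω) ∈ segment ℝ (g₁ w₀) (g₁ (W ω)) := by
    filter_upwards [hWJ] with ω hω
    exact segment_eq_uIcc (g₁ w₀) (g₁ (W ω)) ▸ hcross.apply_mem_uIcc hg₂ hω
  have hmono : ∫ ω, h (g₁ (W ω)) ∂μ - ∫ ω, h (g₂ (W ω)) ∂μ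
      ≤ ∫ ω, c * (g₁ (W ω) - g₂ (W ω)) ∂μ :=
    hsuper.integral_sub_le_integral_map_sub hconc (hg₁ hcross.mem) (hWJ.mono fun _ hω => hg₁ hω)
      hbetween hint₃ hint₄ ((hint₁.sub hint₂).const_mul c)
  rw [integral_const_mul, integral_sub hint₁ hint₂] at hmono
  exact sub_nonneg.1 (nonneg_of_mul_nonneg_right ((sub_nonneg.2 hle).trans hmono) hc)

/-- Ohlin-type lemma, part 2: if `g₁` single crosses `g₂` from below (both nondecreasing on the
interval `J`), `h` is concave, `E[h(g₁(W))] = E[h(g₂(W))]`, and the right derivative of `h`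
at `g₁(w₀)` is strictly positive, then `E[g₁(W)] ≥ E[g₂(W)]`. -/
theorem ohlin_part_two
    {Ω : Type*} [MeasurableSpace Ω] (μ : Measure Ω) [IsProbabilityMeasure μ]
    (J : Set ℝ) (hJ : J.OrdConnected)
    (W : Ω → ℝ) (hWmeas : Measurable W) (hWJ : ∀ ω, W ω ∈ J)
    (g₁ g₂ : ℝ → ℝ) (hg₁ : MonotoneOn g₁ J) (hg₂ : MonotoneOn g₂ J)
    (w₀ : ℝ) (hw₀ : w₀ ∈ J)
    (hcross₁ : ∀ w ∈ J, w ≤ w₀ → g₁ w ≤ g₂ w)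
    (hcross₂ : ∀ w ∈ J, w₀ ≤ w → g₂ w ≤ g₁ w)
    (h : ℝ → ℝ) (hconc : ConcaveOn ℝ Set.univ h)
    (hint₁ : Integrable (fun ω => g₁ (W ω)) μ)
    (hint₂ : Integrable (fun ω => g₂ (W ω)) μ)
    (hint₃ : Integrable (fun ω => h (g₁ (W ω))) μ)
    (hint₄ : Integrable (fun ω => h (g₂ (W ω))) μ)
    (heq : ∫ ω, h (g₁ (W ω)) ∂μ = ∫ ω, h (g₂ (W ω)) ∂μ)
    (hderiv : 0 < derivWithin h (Set.Ioi (g₁ w₀)) (g₁ w₀)) :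
    ∫ ω, g₂ (W ω) ∂μ ≤ ∫ ω, g₁ (W ω) ∂μ := by
  exact ohlin_part_two_general (.of_forall hWJ) (Set.mapsTo_univ _ _) hg₂ ⟨hw₀, hcross₁, hcross₂⟩
    hconc hderiv (isSupergradientOn_rightDeriv hconc (by simp)) hint₁ hint₂ hint₃ hint₄ heq.ge
end

section
/- Let (Ω, 𝒜, μ) be a probability space, J an interval of reals, and W : Ω → J a measurable random variable. Let g₁, g₂ : J → ℝ be nondecreasing functions such that g₁ single crosses g₂ from below at some w₀ ∈ J, and let h : ℝ → ℝ be concave. Assume g₁∘W, g₂∘W, h∘g₁∘W and h∘g₂∘W are all integrable. Then E[h(g₁(W))] − E[h(g₂(W))] ≤ h'₊(g₁(w₀)) · ( E[g₁(W)] − E[g₂(W)] ), where h'₊ denotes the right derivative of h. -/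
open MeasureTheory

/-! Write `t = g₁ w₀ = g₂ w₀` and `c = h'₊(t)`. The function `x ↦ h x - c * x` is concave with
maximum at `t`. Single crossing and the monotonicity of `g₂` place `g₂ w` between `t` and `g₁ w`,
and along the segment from its maximizer `t` to `g₁ w` a concave function stays above its value
at `g₁ w`. Integrating this pointwise inequality gives the claim. -/

section Supergradient

variable {E : Type*} {S : Set E} {h : E → ℝ} {t : E}

lemma sub_le_map_sub_of_mem_segment [AddCommGroup E] [Module ℝ E] {x y : E} {L : E →ₗ[ℝ] ℝ}
    (hh : ConcaveOn ℝ S h) (ht : t ∈ S) (hmax : IsMaxOn (fun z ↦ h z - L z) S t)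
    (hx : x ∈ S) (hy : y ∈ segment ℝ t x) :
    h x - h y ≤ L (x - y) := by
  have hconc : ConcaveOn ℝ S (fun z ↦ h z - L z) := hh.sub (L.convexOn hh.1)
  have hle : h x - L x ≤ h y - L y := by
    calc
      h x - L x = min (h t - L t) (h x - L x) := (min_eq_right (isMaxOn_iff.mp hmax x hx)).symm
      _ ≤ h y - L y := hconc.ge_on_segment ht hx hy
  rw [map_sub]
  linarith

lemma integral_sub_integral_le_of_mem_segment [NormedAddCommGroup E] [NormedSpace ℝ E]
    [CompleteSpace E] {Ω : Type*} [MeasurableSpace Ω] {μ : Measure Ω} {X Y : Ω → E}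
    {L : E →L[ℝ] ℝ} (hh : ConcaveOn ℝ S h) (ht : t ∈ S)
    (hmax : IsMaxOn (fun z ↦ h z - L z) S t) (hXS : ∀ᵐ ω ∂μ, X ω ∈ S)
    (hYX : ∀ᵐ ω ∂μ, Y ω ∈ segment ℝ t (X ω)) (hX : Integrable X μ) (hY : Integrable Y μ)
    (hhX : Integrable (fun ω ↦ h (X ω)) μ) (hhY : Integrable (fun ω ↦ h (Y ω)) μ) :
    (∫ ω, h (X ω) ∂μ) - (∫ ω, h (Y ω) ∂μ) ≤ L ((∫ ω, X ω ∂μ) - (∫ ω, Y ω ∂μ)) := by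
  have hpointwise : ∀ᵐ ω ∂μ, h (X ω) - h (Y ω) ≤ L (X ω - Y ω) := by
    filter_upwards [hXS, hYX] with ω hXω hYω
    exact sub_le_map_sub_of_mem_segment (L := L.toLinearMap) hh ht hmax hXω hYω
  calc
    (∫ ω, h (X ω) ∂μ) - (∫ ω, h (Y ω) ∂μ) = ∫ ω, h (X ω) - h (Y ω) ∂μ :=
      (integral_sub hhX hhY).symm
    _ ≤ ∫ ω, L (X ω - Y ω) ∂μ :=
      integral_mono_ae (hhX.sub hhY) (L.integrable_comp (hX.sub hY)) hpointwise
    _ = L (∫ ω, X ω - Y ω ∂μ) := L.integral_comp_comm (hX.sub hY)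
    _ = L ((∫ ω, X ω ∂μ) - (∫ ω, Y ω ∂μ)) := by rw [integral_sub hX hY]

end Supergradient

lemma isMaxOn_sub_rightDeriv_mul {S : Set ℝ} {h : ℝ → ℝ} {t : ℝ} (hh : ConcaveOn ℝ S h)
    (ht : t ∈ interior S) :
    IsMaxOn (fun x ↦ h x - derivWithin h (Set.Ioi t) t * x) S t := by
  set c := derivWithin h (Set.Ioi t) t
  have hconv : ConvexOn ℝ S (fun x ↦ c * x - h x) :=
    ((LinearMap.mulLeft ℝ c).convexOn hh.1).sub hh
  have hderiv : HasDerivWithinAt h c (Set.Ioi t) t := by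
    have hneg : DifferentiableWithinAt ℝ (-h) (Set.Ioi t) t :=
      hh.neg.differentiableWithinAt_Ioi_of_mem_interior ht
    simpa only [neg_neg] using hneg.neg.hasDerivWithinAt
  have hzero : derivWithin (fun x ↦ c * x - h x) (Set.Ioi t) t = 0 := by
    have hsub := ((hasDerivWithinAt_id t (Set.Ioi t)).const_mul c).sub hderiv
    rw [mul_one, sub_self] at hsub
    exact hsub.derivWithin (uniqueDiffWithinAt_Ioi t)
  simpa only [neg_sub] using (hconv.isMinOn_of_rightDeriv_eq_zero ht hzero).neg

/-- `g₁` single crosses `g₂` from below at `w₀`, as functions on `J`: the graph of `g₁` lies weakly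
below that of `g₂` to the left of `w₀` and weakly above it to the right. Values outside `J` are
irrelevant, and `w₀ ∈ J` is not part of the notion. -/
structure SingleCrossesFromBelow {α β : Type*} [LE α] [LE β] (g₁ g₂ : α → β) (J : Set α)
    (w₀ : α) : Prop where
  le_of_le : ∀ w ∈ J, w ≤ w₀ → g₁ w ≤ g₂ w
  ge_of_ge : ∀ w ∈ J, w₀ ≤ w → g₂ w ≤ g₁ w

namespace SingleCrossesFromBelow

lemma apply_eq {α β : Type*} [Preorder α] [PartialOrder β] {g₁ g₂ : α → β} {J : Set α} {w₀ : α}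
    (hc : SingleCrossesFromBelow g₁ g₂ J w₀) (hw₀ : w₀ ∈ J) : g₁ w₀ = g₂ w₀ :=
  le_antisymm (hc.le_of_le w₀ hw₀ le_rfl) (hc.ge_of_ge w₀ hw₀ le_rfl)

lemma apply_mem_uIcc {α β : Type*} [LinearOrder α] [Lattice β] {g₁ g₂ : α → β} {J : Set α}
    {w w₀ : α} (hc : SingleCrossesFromBelow g₁ g₂ J w₀) (hg₂ : MonotoneOn g₂ J) (hw₀ : w₀ ∈ J)
    (hw : w ∈ J) : g₂ w ∈ Set.uIcc (g₁ w₀) (g₁ w) := by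
  rw [hc.apply_eq hw₀]
  rcases le_total w w₀ with hle | hge
  · exact Set.mem_uIcc_of_ge (hc.le_of_le w hw hle) (hg₂ hw hw₀ hle)
  · exact Set.mem_uIcc_of_le (hg₂ hw₀ hw hge) (hc.ge_of_ge w hw hge)

end SingleCrossesFromBelow

theorem ohlin_key_inequality_general {Ω α : Type*} [MeasurableSpace Ω] [LinearOrder α]
    {μ : Measure Ω} {J : Set α} {W : Ω → α} {g₁ g₂ : α → ℝ} {w₀ : α} {S : Set ℝ} {h : ℝ → ℝ}
    (hWJ : ∀ᵐ ω ∂μ, W ω ∈ J) (hw₀ : w₀ ∈ J) (hg₂ : MonotoneOn g₂ J)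
    (hcross : SingleCrossesFromBelow g₁ g₂ J w₀) (hg₁S : Set.MapsTo g₁ J S)
    (hconc : ConcaveOn ℝ S h) (hg₁w₀ : g₁ w₀ ∈ interior S)
    (hint₁ : Integrable (fun ω ↦ g₁ (W ω)) μ) (hint₂ : Integrable (fun ω ↦ g₂ (W ω)) μ)
    (hint₃ : Integrable (fun ω ↦ h (g₁ (W ω))) μ)
    (hint₄ : Integrable (fun ω ↦ h (g₂ (W ω))) μ) :
    (∫ ω, h (g₁ (W ω)) ∂μ) - (∫ ω, h (g₂ (W ω)) ∂μ) ≤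
      derivWithin h (Set.Ioi (g₁ w₀)) (g₁ w₀) *
        ((∫ ω, g₁ (W ω) ∂μ) - (∫ ω, g₂ (W ω) ∂μ)) := by
  have hbetween : ∀ᵐ ω ∂μ, g₂ (W ω) ∈ segment ℝ (g₁ w₀) (g₁ (W ω)) := by
    filter_upwards [hWJ] with ω hω
    rw [segment_eq_uIcc]
    exact hcross.apply_mem_uIcc hg₂ hw₀ hω
  exact integral_sub_integral_le_of_mem_segment
    (L := ContinuousLinearMap.mul ℝ ℝ (derivWithin h (Set.Ioi (g₁ w₀)) (g₁ w₀)))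
    hconc (hg₁S hw₀) (isMaxOn_sub_rightDeriv_mul hconc hg₁w₀)
    (hWJ.mono fun _ hω ↦ hg₁S hω) hbetween hint₁ hint₂ hint₃ hint₄

/-- Key inequality in the proof of Ohlin's lemma: if `g₁` single crosses `g₂` from below
(both nondecreasing on the interval `J`) and `h` is concave, then
`E[h(g₁(W))] − E[h(g₂(W))] ≤ h'₊(g₁(w₀)) · (E[g₁(W)] − E[g₂(W)])`, where `h'₊` denotes
the right derivative of `h`. -/
theorem ohlin_key_inequality
    {Ω : Type*} [MeasurableSpace Ω] (μ : Measure Ω) [IsProbabilityMeasure μ]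
    (J : Set ℝ) (hJ : J.OrdConnected)
    (W : Ω → ℝ) (hWmeas : Measurable W) (hWJ : ∀ ω, W ω ∈ J)
    (g₁ g₂ : ℝ → ℝ) (hg₁ : MonotoneOn g₁ J) (hg₂ : MonotoneOn g₂ J)
    (w₀ : ℝ) (hw₀ : w₀ ∈ J)
    (hcross₁ : ∀ w ∈ J, w ≤ w₀ → g₁ w ≤ g₂ w)
    (hcross₂ : ∀ w ∈ J, w₀ ≤ w → g₂ w ≤ g₁ w)
    (h : ℝ → ℝ) (hconc : ConcaveOn ℝ Set.univ h)
    (hint₁ : Integrable (fun ω => g₁ (W ω)) μ)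
    (hint₂ : Integrable (fun ω => g₂ (W ω)) μ)
    (hint₃ : Integrable (fun ω => h (g₁ (W ω))) μ)
    (hint₄ : Integrable (fun ω => h (g₂ (W ω))) μ) :
    (∫ ω, h (g₁ (W ω)) ∂μ) - (∫ ω, h (g₂ (W ω)) ∂μ) ≤
      derivWithin h (Set.Ioi (g₁ w₀)) (g₁ w₀) *
        ((∫ ω, g₁ (W ω) ∂μ) - (∫ ω, g₂ (W ω) ∂μ)) := by
  exact ohlin_key_inequality_general (.of_forall hWJ) hw₀ hg₂ ⟨hcross₁, hcross₂⟩
    (Set.mapsTo_univ g₁ J) hconc (by simp) hint₁ hint₂ hint₃ hint₄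
end

section
/- Let (Ω, 𝒜, μ) be a probability space, J an interval of reals, and W : Ω → J a measurable random variable. Let g₁, g₂ : J → ℝ be nondecreasing functions such that g₁ single crosses g₂ from below at some w₀ ∈ J, and set t₀ = g₁(w₀). Define F_i(t) = μ({ω : g_i(W(ω)) ≤ t}) for i = 1, 2. Then F₁(t) ≥ F₂(t) for all t < t₀, and F₁(t) ≤ F₂(t) for all t > t₀. -/
open MeasureTheory

/-!
Below the level `t₀ = g₁ w₀`, the sublevel set of `g₂` lies to the left of `w₀`, where `g₁ ≤ g₂`.
From the level `t₀` on, it contains everything to the left of `w₀`, while `g₂ ≤ g₁` to the right.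
Both comparisons of distribution functions are therefore inclusions of sublevel sets.
-/

section SingleCrossing

variable {α β : Type*} [LinearOrder α] [Preorder β] {J : Set α} {g₁ g₂ : α → β} {w₀ : α} {t : β}

theorem inter_preimage_Iic_subset_of_lt_crossing (hg₂ : MonotoneOn g₂ J) (hw₀ : w₀ ∈ J)
    (hcross : ∀ w ∈ J, w ≤ w₀ → g₁ w ≤ g₂ w) (ht : t < g₁ w₀) :
    J ∩ g₂ ⁻¹' Set.Iic t ⊆ g₁ ⁻¹' Set.Iic t := by
  rintro w ⟨hw, hwt : g₂ w ≤ t⟩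
  have hlt : g₂ w < g₂ w₀ := (hwt.trans_lt ht).trans_le (hcross w₀ hw₀ le_rfl)
  have hww₀ : w < w₀ := hg₂.reflect_lt hw hw₀ hlt
  exact (hcross w hw hww₀.le).trans hwt

theorem inter_preimage_Iic_subset_of_crossing_le (hg₂ : MonotoneOn g₂ J) (hw₀ : w₀ ∈ J)
    (hcross : ∀ w ∈ J, w₀ ≤ w → g₂ w ≤ g₁ w) (ht : g₁ w₀ ≤ t) :
    J ∩ g₁ ⁻¹' Set.Iic t ⊆ g₂ ⁻¹' Set.Iic t := by
  rintro w ⟨hw, hwt : g₁ w ≤ t⟩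
  rcases le_total w w₀ with hle | hge
  · calc
      g₂ w ≤ g₂ w₀ := hg₂ hw hw₀ hle
      _ ≤ g₁ w₀ := hcross w₀ hw₀ le_rfl
      _ ≤ t := ht
  · exact (hcross w hw hge).trans hwt

theorem cdf_crossing_general {Ω : Type*} [MeasurableSpace Ω] {μ : Measure Ω} {W : Ω → α}
    (hWJ : ∀ᵐ ω ∂μ, W ω ∈ J) (hg₂ : MonotoneOn g₂ J) (hw₀ : w₀ ∈ J)
    (hcross₁ : ∀ w ∈ J, w ≤ w₀ → g₁ w ≤ g₂ w)
    (hcross₂ : ∀ w ∈ J, w₀ ≤ w → g₂ w ≤ g₁ w) :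
    (∀ t : β, t < g₁ w₀ → μ {ω | g₂ (W ω) ≤ t} ≤ μ {ω | g₁ (W ω) ≤ t}) ∧
    (∀ t : β, g₁ w₀ ≤ t → μ {ω | g₁ (W ω) ≤ t} ≤ μ {ω | g₂ (W ω) ≤ t}) := by
  refine ⟨fun t ht ↦ measure_mono_ae ?_, fun t ht ↦ measure_mono_ae ?_⟩
  · filter_upwards [hWJ] with ω hω hle
    exact inter_preimage_Iic_subset_of_lt_crossing hg₂ hw₀ hcross₁ ht ⟨hω, hle⟩
  · filter_upwards [hWJ] with ω hω hle
    exact inter_preimage_Iic_subset_of_crossing_le hg₂ hw₀ hcross₂ ht ⟨hω, hle⟩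

end SingleCrossing

/-- If `g₁` single crosses `g₂` from below at `w₀` (both nondecreasing on the interval `J`),
then with `t₀ = g₁ w₀` and `Fᵢ(t) = μ {ω | gᵢ(W ω) ≤ t}`, we have `F₁(t) ≥ F₂(t)` for
`t < t₀` and `F₁(t) ≤ F₂(t)` for `t > t₀`. -/
theorem cdf_crossing
    {Ω : Type*} [MeasurableSpace Ω] (μ : Measure Ω) [IsProbabilityMeasure μ]
    (J : Set ℝ) (hJ : J.OrdConnected)
    (W : Ω → ℝ) (hWmeas : Measurable W) (hWJ : ∀ ω, W ω ∈ J)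
    (g₁ g₂ : ℝ → ℝ) (hg₁ : MonotoneOn g₁ J) (hg₂ : MonotoneOn g₂ J)
    (w₀ : ℝ) (hw₀ : w₀ ∈ J)
    (hcross₁ : ∀ w ∈ J, w ≤ w₀ → g₁ w ≤ g₂ w)
    (hcross₂ : ∀ w ∈ J, w₀ ≤ w → g₂ w ≤ g₁ w) :
    (∀ t : ℝ, t < g₁ w₀ → μ {ω | g₂ (W ω) ≤ t} ≤ μ {ω | g₁ (W ω) ≤ t}) ∧
    (∀ t : ℝ, g₁ w₀ < t → μ {ω | g₁ (W ω) ≤ t} ≤ μ {ω | g₂ (W ω) ≤ t}) :=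
  (cdf_crossing_general (.of_forall hWJ) hg₂ hw₀ hcross₁ hcross₂).imp_right
    fun h t ht ↦ h t ht.le
end

section
/- Let a < b be reals and let f, f̂ : [a,b] → ℝ be strictly positive functions such that the ratio x ↦ f(x)/f̂(x) is nondecreasing on [a,b]. Let g : [a,b] → ℝ be a function that single crosses zero from below, i.e., there exists w₀ ∈ [a,b] with g(x) ≤ 0 for all x ∈ [a, w₀] and g(x) ≥ 0 for all x ∈ [w₀, b]. Assume g·f and g·f̂ are integrable on [a,b]. If ∫ₐᵇ g(x) f̂(x) dx ≥ 0, then ∫ₐᵇ g(x) f(x) dx ≥ 0. -/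
open MeasureTheory

/-! At the crossing point `w`, the ratio `r = f / fhat` takes a value `r w` that lies above `r`
where `g ≤ 0` and below `r` where `0 ≤ g`. Hence `g * r w ≤ g * r` everywhere; multiplying by
`fhat` and integrating gives `r w * ∫ g * fhat ≤ ∫ g * f`, whose left side is nonnegative. -/

/-- `g` single crosses zero from below on `s`, with crossing point `w`. The point `w` is a
parameter, not existentially quantified, because the ratio is compared with its value at `w`. -/
structure SingleCrossesZeroAt {α R : Type*} [LE α] [LE R] [Zero R]
    (g : α → R) (s : Set α) (w : α) : Prop where
  mem : w ∈ s
  nonpos_of_le : ∀ x ∈ s, x ≤ w → g x ≤ 0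
  nonneg_of_ge : ∀ x ∈ s, w ≤ x → 0 ≤ g x

namespace SingleCrossesZeroAt

variable {α : Type*} [LinearOrder α] {s : Set α} {w : α}

theorem mul_apply_le_mul {R : Type*} [Ring R] [PartialOrder R] [IsOrderedRing R]
    {g r : α → R} (hg : SingleCrossesZeroAt g s w) (hr : MonotoneOn r s) {x : α} (hx : x ∈ s) :
    g x * r w ≤ g x * r x := by
  rcases le_total x w with hxw | hwx
  · exact mul_le_mul_of_nonpos_left (hr hx hg.mem hxw) (hg.nonpos_of_le x hx hxw)
  · exact mul_le_mul_of_nonneg_left (hr hg.mem hx hwx) (hg.nonneg_of_ge x hx hwx)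

variable [MeasurableSpace α] {μ : Measure α} {g f : α → ℝ}

theorem mul_setIntegral_le_setIntegral {r h : α → ℝ} (hg : SingleCrossesZeroAt g s w)
    (hs : MeasurableSet s) (hr : MonotoneOn r s) (hh : ∀ x ∈ s, 0 ≤ h x)
    (hf : ∀ x ∈ s, f x = r x * h x) (hgf : IntegrableOn (fun x => g x * f x) s μ)
    (hgh : IntegrableOn (fun x => g x * h x) s μ) :
    r w * ∫ x in s, g x * h x ∂μ ≤ ∫ x in s, g x * f x ∂μ := by
  rw [← integral_const_mul]
  refine setIntegral_mono_on (hgh.const_mul (r w)) hgf hs fun x hx => ?_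
  calc r w * (g x * h x) = g x * r w * h x := by ring
    _ ≤ g x * r x * h x := mul_le_mul_of_nonneg_right (hg.mul_apply_le_mul hr hx) (hh x hx)
    _ = g x * f x := by rw [hf x hx, mul_assoc]

end SingleCrossesZeroAt

theorem likelihood_ratio_single_crossing_general {α : Type*} [LinearOrder α] [MeasurableSpace α]
    {μ : Measure α} {s : Set α} (hs : MeasurableSet s) {f fhat g : α → ℝ} {w : α}
    (hg : SingleCrossesZeroAt g s w) (hf : 0 ≤ f w) (hfhat : ∀ x ∈ s, 0 < fhat x)
    (hratio : MonotoneOn (fun x => f x / fhat x) s)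
    (hgf : IntegrableOn (fun x => g x * f x) s μ)
    (hgfhat : IntegrableOn (fun x => g x * fhat x) s μ)
    (hpos : 0 ≤ ∫ x in s, g x * fhat x ∂μ) :
    0 ≤ ∫ x in s, g x * f x ∂μ :=
  calc 0 ≤ f w / fhat w * ∫ x in s, g x * fhat x ∂μ :=
        mul_nonneg (div_nonneg hf (hfhat w hg.mem).le) hpos
    _ ≤ ∫ x in s, g x * f x ∂μ :=
        hg.mul_setIntegral_le_setIntegral hs hratio (fun x hx => (hfhat x hx).le)
          (fun x hx => (div_mul_cancel₀ (f x) (hfhat x hx).ne').symm) hgf hgfhat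

/-- Lemma A.2 of the paper: if the likelihood ratio `f/f̂` is nondecreasing on `[a,b]`, `g`
single crosses zero from below, and `∫ g f̂ ≥ 0`, then `∫ g f ≥ 0`. -/
theorem likelihood_ratio_single_crossing
    (a b : ℝ) (hab : a < b)
    (f fhat : ℝ → ℝ)
    (hf : ∀ x ∈ Set.Icc a b, 0 < f x)
    (hfhat : ∀ x ∈ Set.Icc a b, 0 < fhat x)
    (hratio : MonotoneOn (fun x => f x / fhat x) (Set.Icc a b))
    (g : ℝ → ℝ)
    (w₀ : ℝ) (hw₀ : w₀ ∈ Set.Icc a b)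
    (hg₁ : ∀ x ∈ Set.Icc a w₀, g x ≤ 0)
    (hg₂ : ∀ x ∈ Set.Icc w₀ b, 0 ≤ g x)
    (hint₁ : IntegrableOn (fun x => g x * f x) (Set.Icc a b))
    (hint₂ : IntegrableOn (fun x => g x * fhat x) (Set.Icc a b))
    (hpos : 0 ≤ ∫ x in Set.Icc a b, g x * fhat x) :
    0 ≤ ∫ x in Set.Icc a b, g x * f x := by
  have hg : SingleCrossesZeroAt g (Set.Icc a b) w₀ :=
    ⟨hw₀, fun x hx hxw => hg₁ x ⟨hx.1, hxw⟩, fun x hx hwx => hg₂ x ⟨hwx, hx.2⟩⟩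
  exact likelihood_ratio_single_crossing_general measurableSet_Icc hg (hf w₀ hw₀).le hfhat hratio
    hint₁ hint₂ hpos
end

section
/- Let a < b be reals and let f, f̂ : [a,b] → ℝ be strictly positive integrable functions with ∫ₐᵇ f(x) dx = ∫ₐᵇ f̂(x) dx = 1, such that the ratio x ↦ f(x)/f̂(x) is nondecreasing on [a,b]. Then for every x₀ ∈ [a,b], ∫_{x₀}^{b} f(x) dx ≥ ∫_{x₀}^{b} f̂(x) dx; that is, the probability distribution with density f first-order stochastically dominates the one with density f̂. -/
open MeasureTheory

/-!
The likelihood ratio crosses the level `1` at most once, upwards. Hence, for an upper set `U`,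
either `g ≤ f` throughout `U`, and the tail inequality is pointwise, or `f ≤ g` throughout the
complement of `U`, and subtracting the masses outside `U` from the total masses gives it.
-/

theorem forall_mem_sdiff_le_or_forall_mem_inter_ge {α β : Type*} [LinearOrder α] [LinearOrder β]
    {r : α → β} {s U : Set α} (hr : MonotoneOn r s) (hU : IsUpperSet U) (c : β) :
    (∀ x ∈ s \ U, r x ≤ c) ∨ ∀ x ∈ s ∩ U, c ≤ r x := by
  by_contra! ⟨⟨x, hx, hcx⟩, y, hy, hyc⟩
  have hxy : x ≤ y := le_of_not_ge fun hyx => hx.2 (hU hyx hy.2)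
  exact (hyc.trans hcx).not_ge (hr hx.1 hy.1 hxy)

theorem setIntegral_inter_le_of_setIntegral_sdiff_ge {α E : Type*} [MeasurableSpace α]
    [NormedAddCommGroup E] [NormedSpace ℝ E] [PartialOrder E] [IsOrderedAddMonoid E]
    {μ : Measure α} {s t : Set α} {f g : α → E} (ht : MeasurableSet t)
    (hf : IntegrableOn f s μ) (hg : IntegrableOn g s μ)
    (hle : ∫ x in s, g x ∂μ ≤ ∫ x in s, f x ∂μ)
    (hsdiff : ∫ x in s \ t, f x ∂μ ≤ ∫ x in s \ t, g x ∂μ) :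
    ∫ x in s ∩ t, g x ∂μ ≤ ∫ x in s ∩ t, f x ∂μ := by
  rw [← integral_inter_add_sdiff ht hg, ← integral_inter_add_sdiff ht hf] at hle
  exact le_of_add_le_add_right (hle.trans (add_le_add_right hsdiff _))

theorem mlr_implies_fosd_general {α : Type*} [LinearOrder α] [MeasurableSpace α]
    {μ : Measure α} {s U : Set α} {f g : α → ℝ}
    (hs : MeasurableSet s) (hU : MeasurableSet U) (hUpper : IsUpperSet U)
    (hgpos : ∀ x ∈ s, 0 < g x) (hf : IntegrableOn f s μ) (hg : IntegrableOn g s μ)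
    (hmass : ∫ x in s, g x ∂μ ≤ ∫ x in s, f x ∂μ)
    (hratio : MonotoneOn (fun x => f x / g x) s) :
    ∫ x in s ∩ U, g x ∂μ ≤ ∫ x in s ∩ U, f x ∂μ := by
  rcases forall_mem_sdiff_le_or_forall_mem_inter_ge hratio hUpper 1 with hbelow | habove
  · refine setIntegral_inter_le_of_setIntegral_sdiff_ge hU hf hg hmass ?_
    exact setIntegral_mono_on (hf.mono_set Set.sdiff_subset) (hg.mono_set Set.sdiff_subset)
      (hs.diff hU) fun x hx => (div_le_one (hgpos x hx.1)).1 (hbelow x hx)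
  · exact setIntegral_mono_on (hg.mono_set Set.inter_subset_left)
      (hf.mono_set Set.inter_subset_left) (hs.inter hU)
      fun x hx => (one_le_div (hgpos x hx.1)).1 (habove x hx)

/-- MLR implies FOSD: if `f` and `f̂` are strictly positive probability densities on `[a,b]`
whose likelihood ratio `f/f̂` is nondecreasing, then the upper-tail mass of `f` dominates
that of `f̂` at every threshold. -/
theorem mlr_implies_fosd
    (a b : ℝ) (hab : a < b)
    (f fhat : ℝ → ℝ)
    (hf : ∀ x ∈ Set.Icc a b, 0 < f x)
    (hfhat : ∀ x ∈ Set.Icc a b, 0 < fhat x)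
    (hfint : IntegrableOn f (Set.Icc a b))
    (hfhatint : IntegrableOn fhat (Set.Icc a b))
    (hfone : ∫ x in Set.Icc a b, f x = 1)
    (hfhatone : ∫ x in Set.Icc a b, fhat x = 1)
    (hratio : MonotoneOn (fun x => f x / fhat x) (Set.Icc a b)) :
    ∀ x₀ ∈ Set.Icc a b, ∫ x in Set.Icc x₀ b, fhat x ≤ ∫ x in Set.Icc x₀ b, f x := by
  intro x₀ hx₀
  have htail : Set.Icc a b ∩ Set.Ici x₀ = Set.Icc x₀ b := by
    rw [← Set.Ici_inter_Iic, Set.inter_right_comm, Set.Ici_inter_Ici, sup_eq_right.2 hx₀.1,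
      Set.Ici_inter_Iic]
  simpa only [htail] using mlr_implies_fosd_general measurableSet_Icc measurableSet_Ici
    (isUpperSet_Ici x₀) hfhat hfint hfhatint (hfhatone.trans hfone.symm).le hratio
end

section
/- Let a < b be reals, I ∈ ℝ, and f : [a,b] → ℝ a strictly positive integrable function with ∫ₐᵇ f(x) dx = 1. Let u : ℝ → ℝ be concave and strictly increasing. Let φ, ψ : [a,b] → ℝ be continuous nondecreasing functions such that x ↦ x − φ(x) and x ↦ x − ψ(x) are nondecreasing on [a,b], and such that the difference x ↦ φ(x) − ψ(x) is quasi-monotone on [a,b]. Assume all the integrals below exist. If ∫ₐᵇ u(x − I − φ(x)) f(x) dx = ∫ₐᵇ u(x − I − ψ(x)) f(x) dx, then ∫ₐᵇ φ(x) f(x) dx ≥ ∫ₐᵇ ψ(x) f(x) dx. -/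
open MeasureTheory

/-!
Write `p` and `q` for the buyer's payoffs under `φ` and `ψ`. Quasi-monotonicity of `φ - ψ` puts
every state with `q < p` before every state with `p < q`, and `p` is monotone, so some level `v`
satisfies `p ≤ v` on the former and `v ≤ p` on the latter: `p` always lies between `q` and `v`.
Let `c > 0` be a slope of `u` at `v`. The concave function `w ↦ u w - c * w` is maximal at `v`, so
moving from `q` towards `v` cannot decrease it, which gives `c * (p - q) ≤ u p - u q` in every
state. Integrating, equal expected utilities leave `p` with at most the expected payoff of `q`.
If `q < p` never occurs the claim is immediate, and if `p < q` never occurs then equal expected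
utilities force `p = q` almost everywhere.
-/

open Set

/-- A function is quasi-monotone on `s` if it crosses zero there at most once, and from below.
This is the single-crossing condition comparing a steeper security with a flatter one. The later
point `w` is bound first. -/
def QuasiMonotoneOn {α β : Type*} [Preorder α] [Preorder β] [Zero β] (g : α → β) (s : Set α) :
    Prop :=
  ∀ w ∈ s, ∀ w' ∈ s, w' < w → 0 < g w' → 0 ≤ g w

namespace QuasiMonotoneOn

variable {α β γ : Type*} [LinearOrder α] [Preorder β] [Zero β] {g : α → β} {s : Set α}

theorem le_of_neg_of_pos (hg : QuasiMonotoneOn g s) {x y : α} (hx : x ∈ s) (hy : y ∈ s)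
    (hgx : g x < 0) (hgy : 0 < g y) : x ≤ y :=
  not_lt.mp fun hyx => (hg x hx y hy hyx hgy).not_gt hgx

theorem exists_separating_value [ConditionallyCompleteLattice γ] {p : α → γ}
    (hg : QuasiMonotoneOn g s) (hp : MonotoneOn p s)
    (hneg : ∃ x ∈ s, g x < 0) (hpos : ∃ x ∈ s, 0 < g x) :
    ∃ v, (∀ x ∈ s, g x < 0 → p x ≤ v) ∧ ∀ x ∈ s, 0 < g x → v ≤ p x := by
  have hle : ∀ a ∈ p '' {x ∈ s | g x < 0}, ∀ b ∈ p '' {x ∈ s | 0 < g x}, a ≤ b := by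
    rintro _ ⟨x, ⟨hx, hgx⟩, rfl⟩ _ ⟨y, ⟨hy, hgy⟩, rfl⟩
    exact hp hx hy (hg.le_of_neg_of_pos hx hy hgx hgy)
  obtain ⟨v, hupper, hlower⟩ := exists_between_of_forall_le (.image p hneg) (.image p hpos) hle
  exact ⟨v, fun x hx hgx => hupper (mem_image_of_mem p ⟨hx, hgx⟩),
    fun x hx hgx => hlower (mem_image_of_mem p ⟨hx, hgx⟩)⟩

end QuasiMonotoneOn

section Quasiconcave

variable {𝕜 β : Type*} [Field 𝕜] [LinearOrder 𝕜] [IsStrictOrderedRing 𝕜] [Preorder β]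
  {S : Set 𝕜} {g : 𝕜 → β} {v : 𝕜}

theorem monotoneOn_inter_Iic_of_isMaxOn (hg : QuasiconcaveOn 𝕜 S g) (hv : v ∈ S)
    (hmax : IsMaxOn g S v) : MonotoneOn g (S ∩ Iic v) :=
  fun x hx _ hy hxy =>
    ((hg (g x)).ordConnected.out ⟨hx.1, le_rfl⟩ ⟨hv, hmax hx.1⟩ ⟨hxy, hy.2⟩).2

theorem antitoneOn_inter_Ici_of_isMaxOn (hg : QuasiconcaveOn 𝕜 S g) (hv : v ∈ S)
    (hmax : IsMaxOn g S v) : AntitoneOn g (S ∩ Ici v) :=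
  fun _ hx y hy hxy =>
    ((hg (g y)).ordConnected.out ⟨hv, hmax hy.1⟩ ⟨hy.1, le_rfl⟩ ⟨hx.2, hxy⟩).2

end Quasiconcave

section Concave

variable {S : Set ℝ} {u : ℝ → ℝ} {v : ℝ}

theorem exists_isMaxOn_sub_mul_of_concaveOn (hu : ConcaveOn ℝ S u) (hv : v ∈ interior S) :
    ∃ c : ℝ, IsMaxOn (fun x => u x - c * x) S v := by
  set d := derivWithin (-u) (Ioi v) v
  have hconvex : ConvexOn ℝ S (fun x => (-u) x - d * x) :=
    hu.neg.sub ((LinearMap.mul ℝ ℝ d).concaveOn hu.1)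
  have hderiv : HasDerivWithinAt (fun x => (-u) x - d * x) (d - d * 1) (Ioi v) v :=
    (hu.neg.hasDerivWithinAt_rightDeriv_of_mem_interior hv).sub
      ((hasDerivWithinAt_id v _).const_mul d)
  have hmin := hconvex.isMinOn_of_rightDeriv_eq_zero hv
    ((hderiv.derivWithin (uniqueDiffWithinAt_Ioi v)).trans (by ring))
  refine ⟨-d, fun x hx => ?_⟩
  have hle : -u v - d * v ≤ -u x - d * x := hmin hx
  change u x - -d * x ≤ u v - -d * v
  linarith

theorem pos_of_isMaxOn_sub_mul {c y : ℝ} (hmax : IsMaxOn (fun x => u x - c * x) S v)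
    (hy : y ∈ S) (hvy : v < y) (huvy : u v < u y) : 0 < c := by
  have hle : u y - c * y ≤ u v - c * v := hmax hy
  exact pos_of_mul_pos_left (b := y - v) (by linarith) (sub_pos.mpr hvy).le

theorem exists_pos_mul_sub_le_sub_of_concaveOn (hconc : ConcaveOn ℝ S u) (hmono : StrictMonoOn u S)
    (hv : v ∈ interior S) :
    ∃ c : ℝ, 0 < c ∧ ∀ x ∈ S, ∀ y ∈ S, (y < x → x ≤ v) → (x < y → v ≤ x) →
      c * (x - y) ≤ u x - u y := by
  obtain ⟨c, hmax⟩ := exists_isMaxOn_sub_mul_of_concaveOn hconc hv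
  have hvS := interior_subset hv
  have hquasi : QuasiconcaveOn ℝ S (fun x => u x - c * x) :=
    (hconc.sub ((LinearMap.mul ℝ ℝ c).convexOn hconc.1)).quasiconcaveOn
  obtain ⟨y, hvy, hy⟩ : ∃ y, v < y ∧ y ∈ S :=
    ((eventually_mem_nhdsWithin (s := Ioi v)).and
      (mem_nhdsWithin_of_mem_nhds (mem_interior_iff_mem_nhds.mp hv))).exists
  refine ⟨c, pos_of_isMaxOn_sub_mul hmax hy hvy (hmono hvS hy hvy),
    fun x hx y hy hbelow habove => ?_⟩
  suffices u y - c * y ≤ u x - c * x by linarith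
  rcases lt_trichotomy y x with hyx | rfl | hxy
  · exact monotoneOn_inter_Iic_of_isMaxOn hquasi hvS hmax
      ⟨hy, hyx.le.trans (hbelow hyx)⟩ ⟨hx, hbelow hyx⟩ hyx.le
  · rfl
  · exact antitoneOn_inter_Ici_of_isMaxOn hquasi hvS hmax
      ⟨hx, habove hxy⟩ ⟨hy, (habove hxy).trans hxy.le⟩ hxy.le

end Concave

section ExpectedPayoff

variable {α : Type*} [MeasurableSpace α] {μ : Measure α} {s : Set α} {f p q : α → ℝ}
  {S : Set ℝ} {u : ℝ → ℝ}

theorem setIntegral_sub_mul_nonneg_of_mul_sub_le_sub (hs : MeasurableSet s)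
    (hf : ∀ x ∈ s, 0 ≤ f x) {c : ℝ} (hc : 0 < c)
    (hslope : ∀ x ∈ s, c * (p x - q x) ≤ u (p x) - u (q x))
    (hint : IntegrableOn (fun x => (q x - p x) * f x) s μ)
    (hintp : IntegrableOn (fun x => u (p x) * f x) s μ)
    (hintq : IntegrableOn (fun x => u (q x) * f x) s μ)
    (hle : ∫ x in s, u (p x) * f x ∂μ ≤ ∫ x in s, u (q x) * f x ∂μ) :
    0 ≤ ∫ x in s, (q x - p x) * f x ∂μ := by
  refine nonneg_of_mul_nonneg_right ?_ hc
  calc 0 ≤ ∫ x in s, u (q x) * f x ∂μ - ∫ x in s, u (p x) * f x ∂μ := sub_nonneg.mpr hle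
    _ = ∫ x in s, (u (q x) * f x - u (p x) * f x) ∂μ := (integral_sub hintq hintp).symm
    _ ≤ ∫ x in s, c * ((q x - p x) * f x) ∂μ :=
        setIntegral_mono_on (hintq.sub hintp) (hint.const_mul c) hs fun x hx => by
          linarith [mul_le_mul_of_nonneg_right (hslope x hx) (hf x hx)]
    _ = c * ∫ x in s, (q x - p x) * f x ∂μ := integral_const_mul c _

theorem setIntegral_sub_mul_eq_zero_of_le (hs : MeasurableSet s) (hf : ∀ x ∈ s, 0 ≤ f x)
    (hu : StrictMonoOn u S) (hpS : MapsTo p s S) (hqS : MapsTo q s S) (hqp : ∀ x ∈ s, q x ≤ p x)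
    (hintp : IntegrableOn (fun x => u (p x) * f x) s μ)
    (hintq : IntegrableOn (fun x => u (q x) * f x) s μ)
    (hle : ∫ x in s, u (p x) * f x ∂μ ≤ ∫ x in s, u (q x) * f x ∂μ) :
    ∫ x in s, (q x - p x) * f x ∂μ = 0 := by
  have hutility : ∀ x ∈ s, u (q x) * f x ≤ u (p x) * f x := fun x hx =>
    mul_le_mul_of_nonneg_right (hu.monotoneOn (hqS hx) (hpS hx) (hqp x hx)) (hf x hx)
  have hae : (fun x => u (q x) * f x) =ᵐ[μ.restrict s] fun x => u (p x) * f x :=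
    (integral_eq_iff_of_ae_le hintq hintp (ae_restrict_of_forall_mem hs hutility)).mp
      ((setIntegral_mono_on hintq hintp hs hutility).antisymm hle)
  refine integral_eq_zero_of_ae ?_
  filter_upwards [hae, ae_restrict_mem hs] with x heq hx
  rcases mul_eq_mul_right_iff.mp heq with hux | hfx
  · simp [hu.injOn (hqS hx) (hpS hx) hux]
  · simp [hfx]

theorem setIntegral_sub_mul_nonneg_of_quasiMonotoneOn [LinearOrder α] (hs : MeasurableSet s)
    (hf : ∀ x ∈ s, 0 ≤ f x) (hS : IsOpen S) (hconc : ConcaveOn ℝ S u) (hmono : StrictMonoOn u S)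
    (hpS : MapsTo p s S) (hqS : MapsTo q s S) (hp : MonotoneOn p s)
    (hpq : QuasiMonotoneOn (fun x => q x - p x) s)
    (hint : IntegrableOn (fun x => (q x - p x) * f x) s μ)
    (hintp : IntegrableOn (fun x => u (p x) * f x) s μ)
    (hintq : IntegrableOn (fun x => u (q x) * f x) s μ)
    (hle : ∫ x in s, u (p x) * f x ∂μ ≤ ∫ x in s, u (q x) * f x ∂μ) :
    0 ≤ ∫ x in s, (q x - p x) * f x ∂μ := by
  by_cases hneg : ∃ x ∈ s, q x - p x < 0
  swap
  · push Not at hneg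
    exact setIntegral_nonneg hs fun x hx => mul_nonneg (hneg x hx) (hf x hx)
  by_cases hpos : ∃ x ∈ s, 0 < q x - p x
  swap
  · push Not at hpos
    exact (setIntegral_sub_mul_eq_zero_of_le hs hf hmono hpS hqS
      (fun x hx => sub_nonpos.mp (hpos x hx)) hintp hintq hle).ge
  obtain ⟨v, hbelow, habove⟩ := hpq.exists_separating_value hp hneg hpos
  obtain ⟨x, hx, hxneg⟩ := hneg
  obtain ⟨y, hy, hypos⟩ := hpos
  have hv : v ∈ S :=
    hconc.1.ordConnected.out (hpS hx) (hpS hy) ⟨hbelow x hx hxneg, habove y hy hypos⟩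
  obtain ⟨c, hc, hslope⟩ :=
    exists_pos_mul_sub_le_sub_of_concaveOn hconc hmono (hS.interior_eq.symm ▸ hv)
  refine setIntegral_sub_mul_nonneg_of_mul_sub_le_sub hs hf hc (fun z hz => ?_) hint hintp hintq hle
  exact hslope _ (hpS hz) _ (hqS hz) (fun h => hbelow z hz (sub_neg.mpr h))
    fun h => habove z hz (sub_pos.mpr h)

end ExpectedPayoff

theorem steeper_security_higher_expected_payment_general
    {α : Type*} [LinearOrder α] [MeasurableSpace α] {μ : Measure α} {s : Set α}
    (hs : MeasurableSet s) {f : α → ℝ} (hf : ∀ x ∈ s, 0 ≤ f x)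
    {S : Set ℝ} {u : ℝ → ℝ} (hS : IsOpen S) (hconc : ConcaveOn ℝ S u) (hmono : StrictMonoOn u S)
    (X : α → ℝ) (I : ℝ) {φ ψ : α → ℝ}
    (hφS : MapsTo (fun x => X x - I - φ x) s S) (hψS : MapsTo (fun x => X x - I - ψ x) s S)
    (hφprofit : MonotoneOn (fun x => X x - φ x) s)
    (hquasi : QuasiMonotoneOn (fun x => φ x - ψ x) s)
    (huφ : IntegrableOn (fun x => u (X x - I - φ x) * f x) s μ)
    (huψ : IntegrableOn (fun x => u (X x - I - ψ x) * f x) s μ)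
    (hφ : IntegrableOn (fun x => φ x * f x) s μ) (hψ : IntegrableOn (fun x => ψ x * f x) s μ)
    (hle : ∫ x in s, u (X x - I - φ x) * f x ∂μ ≤ ∫ x in s, u (X x - I - ψ x) * f x ∂μ) :
    ∫ x in s, ψ x * f x ∂μ ≤ ∫ x in s, φ x * f x ∂μ := by
  have hpayoff : MonotoneOn (fun x => X x - I - φ x) s := fun x hx y hy hxy => by
    simpa only [sub_right_comm _ I, sub_le_sub_iff_right] using hφprofit hx hy hxy
  have hint : IntegrableOn (fun x => φ x * f x - ψ x * f x) s μ := hφ.sub hψ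
  have hgain := setIntegral_sub_mul_nonneg_of_quasiMonotoneOn hs hf hS hconc hmono hφS hψS hpayoff
    (by simpa only [sub_sub_sub_cancel_left] using hquasi)
    (by simpa only [sub_sub_sub_cancel_left, sub_mul] using hint) huφ huψ hle
  simp only [sub_sub_sub_cancel_left, sub_mul] at hgain
  rwa [integral_sub hφ hψ, sub_nonneg] at hgain

/-- If the steeper security `φ` (the difference `φ − ψ` is quasi-monotone) leaves a risk-averse
buyer with the same expected utility as `ψ`, then `φ` yields a weakly larger expected payment. -/
theorem steeper_security_higher_expected_payment
    (a b : ℝ) (hab : a < b) (I : ℝ)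
    (f : ℝ → ℝ) (hf : ∀ x ∈ Set.Icc a b, 0 < f x)
    (hfint : IntegrableOn f (Set.Icc a b))
    (hfone : ∫ x in Set.Icc a b, f x = 1)
    (u : ℝ → ℝ) (huconc : ConcaveOn ℝ Set.univ u) (humono : StrictMono u)
    (φ ψ : ℝ → ℝ)
    (hφcont : ContinuousOn φ (Set.Icc a b)) (hψcont : ContinuousOn ψ (Set.Icc a b))
    (hφmono : MonotoneOn φ (Set.Icc a b)) (hψmono : MonotoneOn ψ (Set.Icc a b))
    (hφprofit : MonotoneOn (fun x => x - φ x) (Set.Icc a b))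
    (hψprofit : MonotoneOn (fun x => x - ψ x) (Set.Icc a b))
    (hquasi : ∀ w ∈ Set.Icc a b, ∀ w' ∈ Set.Icc a b, w' < w →
      0 < φ w' - ψ w' → 0 ≤ φ w - ψ w)
    (hint₁ : IntegrableOn (fun x => u (x - I - φ x) * f x) (Set.Icc a b))
    (hint₂ : IntegrableOn (fun x => u (x - I - ψ x) * f x) (Set.Icc a b))
    (hint₃ : IntegrableOn (fun x => φ x * f x) (Set.Icc a b))
    (hint₄ : IntegrableOn (fun x => ψ x * f x) (Set.Icc a b))
    (heq : ∫ x in Set.Icc a b, u (x - I - φ x) * f x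
            = ∫ x in Set.Icc a b, u (x - I - ψ x) * f x) :
    ∫ x in Set.Icc a b, ψ x * f x ≤ ∫ x in Set.Icc a b, φ x * f x := by
  exact steeper_security_higher_expected_payment_general measurableSet_Icc
    (fun x hx => (hf x hx).le) isOpen_univ huconc (humono.strictMonoOn _) id I (mapsTo_univ _ _)
    (mapsTo_univ _ _) hφprofit hquasi hint₁ hint₂ hint₃ hint₄ heq.le
end

section
/- Let a < b be reals and I ∈ ℝ. Let f_z, f_y : [a,b] → ℝ be strictly positive integrable functions with ∫ₐᵇ f_z = ∫ₐᵇ f_y = 1 and such that for every t ∈ [a,b], ∫ₜᵇ f_y(x) dx ≥ ∫ₜᵇ f_z(x) dx (first-order stochastic dominance of f_y over f_z). Let u : ℝ → ℝ be concave and strictly increasing. Let φ, ψ : [a,b] → ℝ be continuous nondecreasing functions such that x ↦ x − φ(x) and x ↦ x − ψ(x) are nondecreasing on [a,b], and such that x ↦ φ(x) − ψ(x) is nondecreasing on [a,b]. Assume all the integrals below exist. If ∫ₐᵇ u(x − I − φ(x)) f_z(x) dx = 0 = ∫ₐᵇ u(x − I − ψ(x)) f_z(x) dx, then ∫ₐᵇ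 φ(x) f_y(x) dx ≥ ∫ₐᵇ ψ(x) f_y(x) dx. -/
open MeasureTheory

/-!
Write `g = φ - ψ`. If `g` changes sign, then, since `g` and the profit `p x = x - I - φ x` are both
nondecreasing, some level `k` of profit separates the values with `g < 0` (where `p ≤ k`) from those
with `0 ≤ g` (where `k ≤ p`). Replacing `φ` by `ψ` therefore moves the profit further away from `k`,
and a concave `u` with supergradient `s > 0` at `k` gains at most `s * g` from such a move.
Integrating against `fz` and comparing expected utilities gives `0 ≤ E_z g`; when `g` has constant
sign, this already follows from the strict monotonicity of `u`. First-order stochastic dominance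
raises the expectation of the nondecreasing `g`, so `0 ≤ E_z g ≤ E_y g`.
-/

section Concave

open Set

variable {D : Set ℝ} {u : ℝ → ℝ} {k : ℝ}

theorem exists_supergradient_of_concaveOn (hu : ConcaveOn ℝ D u) (hk : k ∈ interior D) :
    ∃ s, ∀ x ∈ D, u x - u k ≤ s * (x - k) := by
  refine ⟨-derivWithin (-u) (Ioi k) k, fun x hx => ?_⟩
  rcases lt_trichotomy x k with hxk | rfl | hkx
  · have hslope := (hu.neg.slope_le_leftDeriv_of_mem_interior hx hk hxk).trans
      (hu.neg.leftDeriv_le_rightDeriv_of_mem_interior hk)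
    rw [slope_def_field, div_le_iff₀ (sub_pos.2 hxk)] at hslope
    simp only [Pi.neg_apply] at hslope
    linarith
  · simp only [sub_self, mul_zero, le_refl]
  · have hslope := hu.neg.rightDeriv_le_slope_of_mem_interior hk hx hkx
    rw [slope_def_field, le_div_iff₀ (sub_pos.2 hkx)] at hslope
    simp only [Pi.neg_apply] at hslope
    linarith

/- Subtracting the supporting line leaves a concave function with maximum at `k`, and such a
function decreases as its argument moves away from `k`. -/
theorem sub_le_mul_sub_of_mem_uIcc_of_supergradient (hu : ConcaveOn ℝ D u) (hk : k ∈ D) {s : ℝ}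
    (hs : ∀ x ∈ D, u x - u k ≤ s * (x - k)) {p q : ℝ} (hq : q ∈ D) (hp : p ∈ uIcc k q) :
    u q - u p ≤ s * (q - p) := by
  have hconc : ConcaveOn ℝ D (fun x => u x - s * x) :=
    hu.sub ((LinearMap.mulLeft ℝ s).convexOn hu.1)
  have hmin : min (u k - s * k) (u q - s * q) ≤ u p - s * p :=
    hconc.ge_on_segment hk hq (by rwa [segment_eq_uIcc])
  rw [min_eq_right (by linarith [hs q hq])] at hmin
  linarith

theorem exists_pos_forall_sub_le_mul_sub_of_mem_uIcc (hu : ConcaveOn ℝ univ u)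
    (hmono : StrictMono u) (k : ℝ) :
    ∃ s > 0, ∀ p q, p ∈ uIcc k q → u q - u p ≤ s * (q - p) := by
  obtain ⟨s, hs⟩ := exists_supergradient_of_concaveOn hu (k := k) (by simp)
  have hpos : 0 < s := by
    linarith [hs (k + 1) (mem_univ _), hmono (lt_add_one k)]
  exact ⟨s, hpos, fun p q hp =>
    sub_le_mul_sub_of_mem_uIcc_of_supergradient hu (mem_univ k) hs (mem_univ q) hp⟩

end Concave

section SingleCrossing

open Set

variable {α : Type*} [LinearOrder α] {S : Set α}

theorem exists_level_of_monotoneOn {p g : α → ℝ} (hp : MonotoneOn p S) (hg : MonotoneOn g S)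
    (hneg : ∃ x ∈ S, g x < 0) (hnonneg : ∃ x ∈ S, 0 ≤ g x) :
    ∃ k, (∀ x ∈ S, g x < 0 → p x ≤ k) ∧ ∀ x ∈ S, 0 ≤ g x → k ≤ p x := by
  have hle : ∀ r ∈ p '' {x ∈ S | g x < 0}, ∀ t ∈ p '' {x ∈ S | 0 ≤ g x}, r ≤ t := by
    rintro _ ⟨x, ⟨hx, hgx⟩, rfl⟩ _ ⟨y, ⟨hy, hgy⟩, rfl⟩
    exact hp hx hy (hg.reflect_lt hx hy (hgx.trans_le hgy)).le
  obtain ⟨k, hkl, hku⟩ := exists_between_of_forall_le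
    (Set.Nonempty.image p hneg) (Set.Nonempty.image p hnonneg) hle
  exact ⟨k, fun x hx hgx => hkl ⟨x, ⟨hx, hgx⟩, rfl⟩, fun x hx hgx => hku ⟨x, ⟨hx, hgx⟩, rfl⟩⟩

theorem integral_sub_nonneg_of_integral_comp_le [MeasurableSpace α] {μ : Measure α}
    (hμ : ∀ᵐ x ∂μ, x ∈ S) {u : ℝ → ℝ} (hu : ConcaveOn ℝ univ u) (hmono : StrictMono u)
    {p q : α → ℝ} (hp : MonotoneOn p S) (hqp : MonotoneOn (fun x => q x - p x) S)
    (hup : Integrable (fun x => u (p x)) μ) (huq : Integrable (fun x => u (q x)) μ)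
    (hint : Integrable (fun x => q x - p x) μ) (hle : ∫ x, u (p x) ∂μ ≤ ∫ x, u (q x) ∂μ) :
    0 ≤ ∫ x, (q x - p x) ∂μ := by
  by_cases hneg : ∃ x ∈ S, q x - p x < 0
  swap
  · push Not at hneg
    exact integral_nonneg_of_ae (hμ.mono hneg)
  by_cases hnonneg : ∃ x ∈ S, 0 ≤ q x - p x
  swap
  · push Not at hnonneg
    have huqp : (fun x => u (q x)) ≤ᵐ[μ] fun x => u (p x) :=
      hμ.mono fun x hx => hmono.monotone (sub_neg.1 (hnonneg x hx)).le
    have heq : (fun x => u (q x)) =ᵐ[μ] fun x => u (p x) :=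
      (integral_eq_iff_of_ae_le huq hup huqp).1 ((integral_mono_ae huq hup huqp).antisymm hle)
    exact integral_nonneg_of_ae (heq.mono fun x hx => (sub_eq_zero.2 (hmono.injective hx)).ge)
  obtain ⟨k, hk_neg, hk_nonneg⟩ := exists_level_of_monotoneOn hp hqp hneg hnonneg
  obtain ⟨s, hs, hslope⟩ := exists_pos_forall_sub_le_mul_sub_of_mem_uIcc hu hmono k
  have hpointwise : ∀ᵐ x ∂μ, u (q x) - u (p x) ≤ s * (q x - p x) := by
    filter_upwards [hμ] with x hx
    refine hslope _ _ (mem_uIcc.2 ?_)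
    rcases lt_or_ge (q x - p x) 0 with h | h
    · exact Or.inr ⟨(sub_neg.1 h).le, hk_neg x hx h⟩
    · exact Or.inl ⟨hk_nonneg x hx h, sub_nonneg.1 h⟩
  have hgain : ∫ x, u (q x) ∂μ - ∫ x, u (p x) ∂μ ≤ s * ∫ x, (q x - p x) ∂μ := by
    rw [← integral_sub huq hup, ← integral_const_mul]
    exact integral_mono_ae (huq.sub hup) (hint.const_mul s) hpointwise
  exact nonneg_of_mul_nonneg_right ((sub_nonneg.2 hle).trans hgain) hs

end SingleCrossing

section StochasticDominance

open Set

theorem lintegral_ofReal_le_of_forall_measure_le {α β : Type*} [MeasurableSpace α]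
    [MeasurableSpace β] {μ : Measure α} {ν : Measure β} {X : α → ℝ} {Y : β → ℝ}
    (hX : AEMeasurable X μ) (hY : AEMeasurable Y ν)
    (h : ∀ r > 0, μ {x | r ≤ X x} ≤ ν {y | r ≤ Y y}) :
    ∫⁻ x, ENNReal.ofReal (X x) ∂μ ≤ ∫⁻ y, ENNReal.ofReal (Y y) ∂ν := by
  calc ∫⁻ x, ENNReal.ofReal (X x) ∂μ = ∫⁻ x, ENNReal.ofReal (max (X x) 0) ∂μ := by
        simp only [ENNReal.ofReal_max, ENNReal.ofReal_zero, zero_le, sup_of_le_left]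
    _ = ∫⁻ r in Ioi 0, μ {x | r ≤ max (X x) 0} :=
        lintegral_eq_lintegral_meas_le μ (.of_forall fun _ => le_max_right _ _)
          (hX.max aemeasurable_const)
    _ ≤ ∫⁻ r in Ioi 0, ν {y | r ≤ max (Y y) 0} := by
        refine setLIntegral_mono' measurableSet_Ioi fun r hr => ?_
        simpa only [le_max_iff, (mem_Ioi.1 hr).not_ge, or_false] using h r hr
    _ = ∫⁻ y, ENNReal.ofReal (max (Y y) 0) ∂ν :=
        (lintegral_eq_lintegral_meas_le ν (.of_forall fun _ => le_max_right _ _)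
          (hY.max aemeasurable_const)).symm
    _ = ∫⁻ y, ENNReal.ofReal (Y y) ∂ν := by
        simp only [ENNReal.ofReal_max, ENNReal.ofReal_zero, zero_le, sup_of_le_left]

theorem integral_le_integral_of_forall_isUpperSet_measure_le {α β : Type*} [MeasurableSpace α]
    [MeasurableSpace β] {μ : Measure α} {ν : Measure β} [IsProbabilityMeasure μ]
    [IsProbabilityMeasure ν] {X : α → ℝ} {Y : β → ℝ} (hX : Integrable X μ) (hY : Integrable Y ν)
    (h : ∀ T, IsUpperSet T → μ (X ⁻¹' T) ≤ ν (Y ⁻¹' T)) :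
    ∫ x, X x ∂μ ≤ ∫ y, Y y ∂ν := by
  have hpos : ∫⁻ x, ENNReal.ofReal (X x) ∂μ ≤ ∫⁻ y, ENNReal.ofReal (Y y) ∂ν :=
    lintegral_ofReal_le_of_forall_measure_le hX.aemeasurable hY.aemeasurable
      fun r _ => h (Ici r) (isUpperSet_Ici r)
  have hneg : ∫⁻ y, ENNReal.ofReal (-Y y) ∂ν ≤ ∫⁻ x, ENNReal.ofReal (-X x) ∂μ := by
    refine lintegral_ofReal_le_of_forall_measure_le hY.aemeasurable.neg hX.aemeasurable.neg
      fun r _ => ?_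
    have hcomplY : {y | r ≤ -Y y} = (Y ⁻¹' Ioi (-r))ᶜ := by ext; simp [le_neg]
    have hcomplX : {x | r ≤ -X x} = (X ⁻¹' Ioi (-r))ᶜ := by ext; simp [le_neg]
    rw [hcomplY, hcomplX,
      prob_compl_eq_one_sub₀ (hY.aemeasurable.nullMeasurableSet_preimage measurableSet_Ioi),
      prob_compl_eq_one_sub₀ (hX.aemeasurable.nullMeasurableSet_preimage measurableSet_Ioi)]
    exact tsub_le_tsub_left (h (Ioi (-r)) (isUpperSet_Ioi (-r))) 1
  rw [integral_eq_lintegral_pos_part_sub_lintegral_neg_part hX,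
    integral_eq_lintegral_pos_part_sub_lintegral_neg_part hY]
  exact sub_le_sub (ENNReal.toReal_mono hY.lintegral_lt_top.ne hpos)
    (ENNReal.toReal_mono hX.neg.lintegral_lt_top.ne hneg)

variable {α : Type*} [LinearOrder α] [TopologicalSpace α] [OrderTopology α]
  [MeasurableSpace α] [BorelSpace α] {μ ν : Measure α} {S T : Set α}

/- A nonempty compact subset of `S ∩ T` has a least element `t`, which lies in `S`, and is contained
in `Ici t ⊆ T`; inner regularity of `μ` exhausts `T` by such subsets. -/
theorem measure_le_of_isUpperSet [IsFiniteMeasure μ] [μ.InnerRegularCompactLTTop]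
    (hS : MeasurableSet S) (hμ : ∀ᵐ x ∂μ, x ∈ S) (h : ∀ t ∈ S, μ (Ici t) ≤ ν (Ici t))
    (hT : IsUpperSet T) : μ T ≤ ν T := by
  have hTS : μ T = μ (T ∩ S) := measure_congr <| by
    filter_upwards [hμ] with x hx using propext ⟨fun hxT => ⟨hxT, hx⟩, And.left⟩
  rw [hTS, (hT.ordConnected.measurableSet.inter hS).measure_eq_iSup_isCompact_of_ne_top
    (measure_ne_top μ _)]
  refine iSup_le fun K => iSup₂_le fun hK hKcomp => ?_
  rcases K.eq_empty_or_nonempty with rfl | hne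
  · simp only [measure_empty, zero_le]
  obtain ⟨t, htK, ht⟩ := hKcomp.exists_isLeast hne
  calc μ K ≤ μ (Ici t) := measure_mono fun _ hx => ht hx
    _ ≤ ν (Ici t) := h t (hK htK).2
    _ ≤ ν T := measure_mono (hT.Ici_subset (hK htK).1)

theorem integral_le_integral_of_monotoneOn [IsProbabilityMeasure μ] [IsProbabilityMeasure ν]
    [μ.InnerRegularCompactLTTop] (hS : MeasurableSet S) (hμ : ∀ᵐ x ∂μ, x ∈ S)
    (hν : ∀ᵐ x ∂ν, x ∈ S) (h : ∀ t ∈ S, μ (Ici t) ≤ ν (Ici t)) {g : α → ℝ}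
    (hg : MonotoneOn g S) (hgμ : Integrable g μ) (hgν : Integrable g ν) :
    ∫ x, g x ∂μ ≤ ∫ x, g x ∂ν := by
  refine integral_le_integral_of_forall_isUpperSet_measure_le hgμ hgν fun T hT => ?_
  let U : Set α := upperClosure (S ∩ g ⁻¹' T)
  have hμU : μ (g ⁻¹' T) ≤ μ U := measure_mono_ae <| by
    filter_upwards [hμ] with x hx hxT using subset_upperClosure ⟨hx, hxT⟩
  have hνU : ν U ≤ ν (g ⁻¹' T) := measure_mono_ae <| by
    filter_upwards [hν] with x hx
    rintro ⟨y, ⟨hy, hyT⟩, hyx⟩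
    exact hT (hg hy hx hyx) hyT
  exact hμU.trans ((measure_le_of_isUpperSet hS hμ h (upperClosure _).upper).trans hνU)

end StochasticDominance

section DensityMeasure

variable {α : Type*} [MeasurableSpace α] {m : Measure α} {S : Set α} {f : α → ℝ}

/-- The measure concentrated on `S` with density `f` with respect to `m`, which turns the
conditional densities of the winner's value into laws. Since `f` enters through `ENNReal.ofReal`,
its negative values are cut off at `0`. -/
noncomputable def densityMeasure (m : Measure α) (S : Set α) (f : α → ℝ) : Measure α :=
  (m.restrict S).withDensity fun x => ENNReal.ofReal (f x)

theorem ae_mem_densityMeasure (hS : MeasurableSet S) : ∀ᵐ x ∂densityMeasure m S f, x ∈ S :=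
  withDensity_absolutelyContinuous _ _ (ae_restrict_mem hS)

theorem densityMeasure_apply (hS : MeasurableSet S) (hf : ∀ x ∈ S, 0 ≤ f x)
    (hfint : IntegrableOn f S m) {T : Set α} (hT : MeasurableSet T) :
    densityMeasure m S f T = ENNReal.ofReal (∫ x in S ∩ T, f x ∂m) := by
  rw [densityMeasure, withDensity_apply _ hT, Measure.restrict_restrict hT, Set.inter_comm,
    ofReal_integral_eq_lintegral_ofReal (hfint.mono_set Set.inter_subset_left)]
  exact (ae_restrict_mem (hS.inter hT)).mono fun x hx => hf x hx.1

theorem isProbabilityMeasure_densityMeasure (hS : MeasurableSet S) (hf : ∀ x ∈ S, 0 ≤ f x)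
    (hfint : IntegrableOn f S m) (hone : ∫ x in S, f x ∂m = 1) :
    IsProbabilityMeasure (densityMeasure m S f) where
  measure_univ := by
    rw [densityMeasure_apply hS hf hfint MeasurableSet.univ, Set.inter_univ, hone,
      ENNReal.ofReal_one]

theorem toReal_ofReal_smul_ae_eq_mul (hS : MeasurableSet S) (hf : ∀ x ∈ S, 0 ≤ f x) (g : α → ℝ) :
    (fun x => (ENNReal.ofReal (f x)).toReal • g x) =ᵐ[m.restrict S] fun x => g x * f x := by
  filter_upwards [ae_restrict_mem hS] with x hx
  rw [ENNReal.toReal_ofReal (hf x hx), smul_eq_mul, mul_comm]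

theorem integrable_densityMeasure_iff (hS : MeasurableSet S) (hf : ∀ x ∈ S, 0 ≤ f x)
    (hfint : IntegrableOn f S m) {g : α → ℝ} :
    Integrable g (densityMeasure m S f) ↔ IntegrableOn (fun x => g x * f x) S m :=
  (integrable_withDensity_iff_integrable_smul₀' hfint.aemeasurable.ennreal_ofReal
    (.of_forall fun _ => ENNReal.ofReal_lt_top)).trans
    (integrable_congr (toReal_ofReal_smul_ae_eq_mul hS hf g))

theorem integral_densityMeasure (hS : MeasurableSet S) (hf : ∀ x ∈ S, 0 ≤ f x)
    (hfint : IntegrableOn f S m) (g : α → ℝ) :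
    ∫ x, g x ∂densityMeasure m S f = ∫ x in S, g x * f x ∂m :=
  (integral_withDensity_eq_integral_toReal_smul₀ hfint.aemeasurable.ennreal_ofReal
    (.of_forall fun _ => ENNReal.ofReal_lt_top) g).trans
    (integral_congr_ae (toReal_ofReal_smul_ae_eq_mul hS hf g))

end DensityMeasure

theorem revenue_ranking_strong_steepness_fosd_general {m : Measure ℝ} {S : Set ℝ}
    (hS : MeasurableSet S) {I : ℝ} {fz fy : ℝ → ℝ}
    (hfz : ∀ x ∈ S, 0 ≤ fz x) (hfy : ∀ x ∈ S, 0 ≤ fy x)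
    (hfzint : IntegrableOn fz S m) (hfyint : IntegrableOn fy S m)
    (hfzone : ∫ x in S, fz x ∂m = 1) (hfyone : ∫ x in S, fy x ∂m = 1)
    (hfosd : ∀ t ∈ S, ∫ x in S ∩ Set.Ici t, fz x ∂m ≤ ∫ x in S ∩ Set.Ici t, fy x ∂m)
    {u : ℝ → ℝ} (huconc : ConcaveOn ℝ Set.univ u) (humono : StrictMono u) {φ ψ : ℝ → ℝ}
    (hφprofit : MonotoneOn (fun x => x - φ x) S) (hstrong : MonotoneOn (fun x => φ x - ψ x) S)
    (huφ : IntegrableOn (fun x => u (x - I - φ x) * fz x) S m)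
    (huψ : IntegrableOn (fun x => u (x - I - ψ x) * fz x) S m)
    (hφz : IntegrableOn (fun x => φ x * fz x) S m) (hψz : IntegrableOn (fun x => ψ x * fz x) S m)
    (hφy : IntegrableOn (fun x => φ x * fy x) S m) (hψy : IntegrableOn (fun x => ψ x * fy x) S m)
    (hutility : ∫ x in S, u (x - I - φ x) * fz x ∂m ≤ ∫ x in S, u (x - I - ψ x) * fz x ∂m) :
    ∫ x in S, ψ x * fy x ∂m ≤ ∫ x in S, φ x * fy x ∂m := by
  have := isProbabilityMeasure_densityMeasure hS hfz hfzint hfzone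
  have := isProbabilityMeasure_densityMeasure hS hfy hfyint hfyone
  simp only [← integrable_densityMeasure_iff hS hfz hfzint,
    ← integrable_densityMeasure_iff hS hfy hfyint] at huφ huψ hφz hψz hφy hψy
  simp only [← integral_densityMeasure hS hfz hfzint] at hutility
  have hprofit : MonotoneOn (fun x => x - I - φ x) S := fun x hx y hy hxy => by
    linarith [hφprofit hx hy hxy]
  have hprofit_sub (x : ℝ) : (x - I - ψ x) - (x - I - φ x) = φ x - ψ x := by ring
  have hgz : Integrable (fun x => φ x - ψ x) (densityMeasure m S fz) := hφz.sub hψz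
  have hz : 0 ≤ ∫ x, (φ x - ψ x) ∂densityMeasure m S fz := by
    simpa only [hprofit_sub] using integral_sub_nonneg_of_integral_comp_le
      (ae_mem_densityMeasure hS) huconc humono hprofit (by simpa only [hprofit_sub] using hstrong)
      huφ huψ (by simpa only [hprofit_sub] using hgz) hutility
  have hzy : ∫ x, (φ x - ψ x) ∂densityMeasure m S fz ≤ ∫ x, (φ x - ψ x) ∂densityMeasure m S fy := by
    refine integral_le_integral_of_monotoneOn hS (ae_mem_densityMeasure hS)
      (ae_mem_densityMeasure hS) (fun t ht => ?_) hstrong hgz (hφy.sub hψy)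
    rw [densityMeasure_apply hS hfz hfzint measurableSet_Ici,
      densityMeasure_apply hS hfy hfyint measurableSet_Ici]
    exact ENNReal.ofReal_le_ofReal (hfosd t ht)
  rw [← integral_densityMeasure hS hfy hfyint, ← integral_densityMeasure hS hfy hfyint,
    ← sub_nonneg, ← integral_sub hφy hψy]
  exact hz.trans hzy

/-- Ex-post form of the revenue ranking under PD-FOSD (Proposition 4.2): with break-even bids
at the density `f_z` and first-order stochastic dominance of `f_y` over `f_z`, the strongly
steeper security `φ` (i.e. `φ − ψ` nondecreasing) yields a weakly larger expected payment
under the density `f_y`. -/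
theorem revenue_ranking_strong_steepness_fosd
    (a b : ℝ) (hab : a < b) (I : ℝ)
    (fz fy : ℝ → ℝ)
    (hfz : ∀ x ∈ Set.Icc a b, 0 < fz x) (hfy : ∀ x ∈ Set.Icc a b, 0 < fy x)
    (hfzint : IntegrableOn fz (Set.Icc a b)) (hfyint : IntegrableOn fy (Set.Icc a b))
    (hfzone : ∫ x in Set.Icc a b, fz x = 1) (hfyone : ∫ x in Set.Icc a b, fy x = 1)
    (hfosd : ∀ t ∈ Set.Icc a b,
      ∫ x in Set.Icc t b, fz x ≤ ∫ x in Set.Icc t b, fy x)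
    (u : ℝ → ℝ) (huconc : ConcaveOn ℝ Set.univ u) (humono : StrictMono u)
    (φ ψ : ℝ → ℝ)
    (hφcont : ContinuousOn φ (Set.Icc a b)) (hψcont : ContinuousOn ψ (Set.Icc a b))
    (hφmono : MonotoneOn φ (Set.Icc a b)) (hψmono : MonotoneOn ψ (Set.Icc a b))
    (hφprofit : MonotoneOn (fun x => x - φ x) (Set.Icc a b))
    (hψprofit : MonotoneOn (fun x => x - ψ x) (Set.Icc a b))
    (hstrong : MonotoneOn (fun x => φ x - ψ x) (Set.Icc a b))
    (hint₁ : IntegrableOn (fun x => u (x - I - φ x) * fz x) (Set.Icc a b))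
    (hint₂ : IntegrableOn (fun x => u (x - I - ψ x) * fz x) (Set.Icc a b))
    (hint₃ : IntegrableOn (fun x => φ x * fz x) (Set.Icc a b))
    (hint₄ : IntegrableOn (fun x => ψ x * fz x) (Set.Icc a b))
    (hint₅ : IntegrableOn (fun x => φ x * fy x) (Set.Icc a b))
    (hint₆ : IntegrableOn (fun x => ψ x * fy x) (Set.Icc a b))
    (heqφ : ∫ x in Set.Icc a b, u (x - I - φ x) * fz x = 0)
    (heqψ : ∫ x in Set.Icc a b, u (x - I - ψ x) * fz x = 0) :
    ∫ x in Set.Icc a b, ψ x * fy x ≤ ∫ x in Set.Icc a b, φ x * fy x := by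
  exact revenue_ranking_strong_steepness_fosd_general measurableSet_Icc
    (fun x hx => (hfz x hx).le) (fun x hx => (hfy x hx).le) hfzint hfyint hfzone hfyone
    (fun t ht => by simpa only [← Set.Ici_inter_Iic, Set.inter_right_comm, Set.Ici_inter_Ici,
      sup_of_le_right ht.1] using hfosd t ht)
    huconc humono hφprofit hstrong hint₁ hint₂ hint₃ hint₄ hint₅ hint₆ (heqφ.trans heqψ.symm).le
end

section
/- For y ∈ [0,1], define f(x, y) = 1 − y + 6xy for 0 ≤ x ≤ 1/3 and f(x, y) = 1 for 1/3 < x ≤ 1. Then for all ŷ, y with 0 ≤ ŷ < y ≤ 1, the likelihood ratio x ↦ f(x, y)/f(x, ŷ) is not nondecreasing on [0,1]: there exist x, x' with 0 ≤ x < x' ≤ 1 and f(x, y)/f(x, ŷ) > f(x', y)/f(x', ŷ). Indeed, f(x, y)/f(x, ŷ) > 1 for every x ∈ (1/6, 1/3], while f(x', y)/f(x', ŷ) = 1 for every x' ∈ (1/3, 1]. -/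
open MeasureTheory

/-- The conditional density of the value given the signal `y` in Example 4.1. -/
noncomputable def exDensity (x y : ℝ) : ℝ :=
  if x ≤ 1 / 3 then 1 - y + 6 * x * y else 1

section

variable {x y yhat : ℝ}

theorem exDensity_of_le (hx : x ≤ 1 / 3) (y : ℝ) : exDensity x y = 1 + (6 * x - 1) * y := by
  rw [exDensity, if_pos hx]
  ring

theorem exDensity_of_lt (hx : 1 / 3 < x) (y : ℝ) : exDensity x y = 1 :=
  if_neg hx.not_ge

theorem exDensity_pos (hx : 1 / 6 < x) (hy : -1 < y) : 0 < exDensity x y := by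
  rcases le_or_gt x (1 / 3) with hx_le | hx_gt
  · have slope_pos : 0 < 6 * x - 1 := by linarith
    have value_at_neg_one_nonneg : 0 ≤ 2 - 6 * x := by linarith
    have y_add_one_pos : 0 < y + 1 := by linarith
    -- Expand the affine function `1 + (6 * x - 1) * y` around `y = -1`.
    calc
      0 < (2 - 6 * x) + (6 * x - 1) * (y + 1) := by positivity
      _ = 1 + (6 * x - 1) * y := by ring
      _ = exDensity x y := (exDensity_of_le hx_le y).symm
  · rw [exDensity_of_lt hx_gt]
    exact one_pos

theorem strictMono_exDensity (hx : x ∈ Set.Ioc (1 / 6 : ℝ) (1 / 3)) :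
    StrictMono (exDensity x) := by
  intro y₁ y₂ hy
  have slope_pos : 0 < 6 * x - 1 := by linarith [hx.1]
  rw [exDensity_of_le hx.2, exDensity_of_le hx.2]
  gcongr

theorem one_lt_exDensity_div (hx : x ∈ Set.Ioc (1 / 6 : ℝ) (1 / 3)) (hyhat : -1 < yhat)
    (hlt : yhat < y) : 1 < exDensity x y / exDensity x yhat :=
  (one_lt_div (exDensity_pos hx.1 hyhat)).mpr (strictMono_exDensity hx hlt)

theorem exDensity_div_eq_one (hx : 1 / 3 < x) (y yhat : ℝ) :
    exDensity x y / exDensity x yhat = 1 := by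
  rw [exDensity_of_lt hx, exDensity_of_lt hx, div_one]

theorem exDensity_div_at_one_lt_at_one_third (hyhat : -1 < yhat) (hlt : yhat < y) :
    exDensity 1 y / exDensity 1 yhat < exDensity (1 / 3) y / exDensity (1 / 3) yhat := by
  rw [exDensity_div_eq_one (by norm_num : (1 / 3 : ℝ) < 1)]
  exact one_lt_exDensity_div (by norm_num) hyhat hlt

end

theorem example_density_mlr_fails_general {yhat y : ℝ} (hyhat : -1 < yhat) (hlt : yhat < y) :
    (¬ MonotoneOn (fun x => exDensity x y / exDensity x yhat) (Set.Icc (0 : ℝ) 1)) ∧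
      (∃ x x' : ℝ, 0 ≤ x ∧ x < x' ∧ x' ≤ 1 ∧
        exDensity x' y / exDensity x' yhat < exDensity x y / exDensity x yhat) ∧
      (∀ x ∈ Set.Ioc (1 / 6 : ℝ) (1 / 3), 1 < exDensity x y / exDensity x yhat) ∧
      (∀ x' ∈ Set.Ioc (1 / 3 : ℝ) 1, exDensity x' y / exDensity x' yhat = 1) := by
  have ratio_drops := exDensity_div_at_one_lt_at_one_third hyhat hlt
  refine ⟨fun ratio_mono => ?_, ⟨1 / 3, 1, by norm_num, by norm_num, le_rfl, ratio_drops⟩,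
    fun x hx => one_lt_exDensity_div hx hyhat hlt,
    fun x' hx' => exDensity_div_eq_one hx'.1 y yhat⟩
  have ratio_le := ratio_mono (a := 1 / 3) (b := 1) (by norm_num) (by norm_num) (by norm_num)
  exact ratio_drops.not_ge ratio_le

/-- In Example 4.1, the MLR property fails: for `ŷ < y` the likelihood ratio
`x ↦ f(x,y)/f(x,ŷ)` is not nondecreasing on `[0,1]`; indeed it exceeds `1` on `(1/6, 1/3]`
and equals `1` on `(1/3, 1]`. -/
theorem example_density_mlr_fails :
    ∀ yhat y : ℝ, 0 ≤ yhat → yhat < y → y ≤ 1 →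
      (¬ MonotoneOn (fun x => exDensity x y / exDensity x yhat) (Set.Icc (0:ℝ) 1)) ∧
      (∃ x x' : ℝ, 0 ≤ x ∧ x < x' ∧ x' ≤ 1 ∧
        exDensity x' y / exDensity x' yhat < exDensity x y / exDensity x yhat) ∧
      (∀ x ∈ Set.Ioc (1/6 : ℝ) (1/3), 1 < exDensity x y / exDensity x yhat) ∧
      (∀ x' ∈ Set.Ioc (1/3 : ℝ) 1, exDensity x' y / exDensity x' yhat = 1) := by
  intro yhat y hyhat hlt _
  exact example_density_mlr_fails_general (by linarith) hlt
end

section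
/- For y ∈ [0,1], define f(x, y) = 1 − y + 6xy for 0 ≤ x ≤ 1/3 and f(x, y) = 1 for 1/3 < x ≤ 1. Then for every bᵉ ∈ ℝ, every b^d with 1/3 ≤ b^d ≤ 1, and every y₁, y₂ ∈ [0,1], one has ∫₀¹ ( bᵉ·t − min(t, b^d) ) ( f(t, y₁) − f(t, y₂) ) dt = (bᵉ − 1)(y₁ − y₂)/54. In particular, if bᵉ < 1 and y₁ > y₂ this integral is strictly negative. -/
open MeasureTheory intervalIntegral

/-!
Two of the densities differ only on `[0, 1/3]`, by `(y₁ - y₂) (6 t - 1)`. On that interval a debt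
claim of face value at least `1/3` collects the whole value `t`, so equity minus debt pays
`(bᵉ - 1) t`, and `∫₀^{1/3} t (6 t - 1) dt = 1/54`.
-/

theorem exDensity_sub_exDensity (t y₁ y₂ : ℝ) :
    exDensity t y₁ - exDensity t y₂ =
      (Set.Iic (1 / 3)).indicator (fun t ↦ (y₁ - y₂) * (6 * t - 1)) t := by
  simp only [exDensity, Set.indicator, Set.mem_Iic]
  split_ifs <;> ring

theorem integral_mul_exDensity_sub_exDensity (g : ℝ → ℝ) (y₁ y₂ : ℝ) :
    (∫ t in (0 : ℝ)..1, g t * (exDensity t y₁ - exDensity t y₂)) =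
      (y₁ - y₂) * ∫ t in (0 : ℝ)..(1 / 3), g t * (6 * t - 1) := by
  calc
    _ = ∫ t in (0 : ℝ)..1,
          (Set.Iic (1 / 3)).indicator (fun t ↦ (y₁ - y₂) * (g t * (6 * t - 1))) t := by
      simp only [exDensity_sub_exDensity, ← Set.indicator_mul_right, mul_left_comm]
    _ = ∫ t in (0 : ℝ)..(1 / 3), (y₁ - y₂) * (g t * (6 * t - 1)) :=
      integral_indicator (by norm_num)
    _ = _ := integral_const_mul _ _

theorem integral_id_mul_six_mul_sub_one :
    (∫ t in (0 : ℝ)..(1 / 3), t * (6 * t - 1)) = 1 / 54 := by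
  have expand (t : ℝ) : t * (6 * t - 1) = 6 * t ^ 2 - t := by ring
  simp only [expand]
  rw [integral_sub (Continuous.intervalIntegrable (by fun_prop) _ _)
    (Continuous.intervalIntegrable (by fun_prop) _ _), intervalIntegral.integral_const_mul,
    integral_pow, integral_id]
  norm_num

theorem integral_mul_exDensity_sub_exDensity_of_eqOn {g : ℝ → ℝ} {c : ℝ}
    (hg : Set.EqOn g (fun t ↦ c * t) (Set.Ioo 0 (1 / 3))) (y₁ y₂ : ℝ) :
    (∫ t in (0 : ℝ)..1, g t * (exDensity t y₁ - exDensity t y₂)) = c * (y₁ - y₂) / 54 := by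
  have linear_payoff : (∫ t in (0 : ℝ)..(1 / 3), g t * (6 * t - 1)) = c * (1 / 54) := by
    rw [← integral_id_mul_six_mul_sub_one, ← intervalIntegral.integral_const_mul]
    refine integral_congr_Ioo_of_le (by norm_num) fun t ht ↦ ?_
    simp only [hg ht, mul_assoc]
  rw [integral_mul_exDensity_sub_exDensity, linear_payoff]
  ring

theorem equity_sub_debt_of_le (be : ℝ) {bd t : ℝ} (ht : t ≤ bd) :
    be * t - min t bd = (be - 1) * t := by
  rw [min_eq_left ht, sub_one_mul]

theorem example_equity_minus_debt_integral_general
    (be : ℝ) {bd : ℝ} (hbd : 1 / 3 ≤ bd) (y₁ y₂ : ℝ) :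
    (∫ t in (0 : ℝ)..1, (be * t - min t bd) * (exDensity t y₁ - exDensity t y₂))
      = (be - 1) * (y₁ - y₂) / 54 ∧
    (be < 1 → y₂ < y₁ →
      (∫ t in (0 : ℝ)..1, (be * t - min t bd) * (exDensity t y₁ - exDensity t y₂)) < 0) := by
  have integral_eq := integral_mul_exDensity_sub_exDensity_of_eqOn
    (fun t ht ↦ equity_sub_debt_of_le be (ht.2.le.trans hbd)) y₁ y₂
  refine ⟨integral_eq, fun hbe hy ↦ ?_⟩
  rw [integral_eq]
  exact div_neg_of_neg_of_pos (mul_neg_of_neg_of_pos (sub_neg.2 hbe) (sub_pos.2 hy)) (by norm_num)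

/-- Key computation in the proof of Proposition 4.1:
`∫₀¹ (bᵉ t − min(t, b^d)) (f(t,y₁) − f(t,y₂)) dt = (bᵉ − 1)(y₁ − y₂)/54` whenever
`1/3 ≤ b^d ≤ 1`; in particular the integral is strictly negative when `bᵉ < 1` and
`y₁ > y₂`. -/
theorem example_equity_minus_debt_integral
    (be bd : ℝ) (hbd : 1/3 ≤ bd) (hbd' : bd ≤ 1)
    (y₁ y₂ : ℝ) (hy₁ : y₁ ∈ Set.Icc (0:ℝ) 1) (hy₂ : y₂ ∈ Set.Icc (0:ℝ) 1) :
    (∫ t in (0:ℝ)..1, (be * t - min t bd) * (exDensity t y₁ - exDensity t y₂))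
      = (be - 1) * (y₁ - y₂) / 54 ∧
    (be < 1 → y₂ < y₁ →
      (∫ t in (0:ℝ)..1, (be * t - min t bd) * (exDensity t y₁ - exDensity t y₂)) < 0) :=
  example_equity_minus_debt_integral_general be hbd y₁ y₂
end

section
/- For y ∈ [0,1], define f(x, y) = 1 − y + 6xy for 0 ≤ x ≤ 1/3 and f(x, y) = 1 for 1/3 < x ≤ 1. Fix I with 0 < I < 2/9 and y ∈ [0,1]. Then: (i) if b ∈ [0,1] satisfies ∫₀¹ ( t − I − min(t, b) ) f(t, y) dt = 0, then b > 1/3; and (ii) if b ∈ ℝ satisfies ∫₀¹ ( t − I − b·t ) f(t, y) dt = 0, then b < 1. -/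
open MeasureTheory intervalIntegral

/-!
A buyer's expected profit decreases as the security he pays with increases pointwise. Under the
debt bid `1/3` the returns `t ≤ 1/3`, where the density depends on `y`, are entirely paid away, and
the total mass is `1` for every `y`; so the profit is `2/9 - I > 0`, where `2/9` is the integral of
`t - 1/3` over `[1/3, 1]`, and a break-even debt bid exceeds `1/3`. Under the equity bid `1`
everything is paid away and the profit is `-I < 0`; so a break-even equity bid is below `1`.
-/

open Set

/-- The expected profit of a buyer who invests `I`, receives a return `t` with density `f` on
`[l, r]`, and pays `S t` out of it. The mass of `f` is not normalised. -/
noncomputable def expectedProfit (l r : ℝ) (f : ℝ → ℝ) (I : ℝ) (S : ℝ → ℝ) : ℝ :=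
  ∫ t in l..r, (t - I - S t) * f t

section ExpectedProfit

variable {l r : ℝ} {f S T : ℝ → ℝ}

lemma expectedProfit_le_expectedProfit (hlr : l ≤ r) (hf : IntervalIntegrable f volume l r)
    (hf_nonneg : ∀ t ∈ Icc l r, 0 ≤ f t) (hS : ContinuousOn S (uIcc l r))
    (hT : ContinuousOn T (uIcc l r)) (hST : ∀ t ∈ Icc l r, S t ≤ T t) (I : ℝ) :
    expectedProfit l r f I T ≤ expectedProfit l r f I S :=
  integral_mono_on hlr (hf.continuousOn_mul (by fun_prop)) (hf.continuousOn_mul (by fun_prop))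
    fun t ht ↦ mul_le_mul_of_nonneg_right (sub_le_sub_left (hST t ht) _) (hf_nonneg t ht)

lemma expectedProfit_id (l r : ℝ) (f : ℝ → ℝ) (I : ℝ) :
    expectedProfit l r f I id = -I * ∫ t in l..r, f t := by
  simp [expectedProfit]

end ExpectedProfit

section ExDensity

lemma exDensity_nonneg {t y : ℝ} (ht : 0 ≤ t) (hy : y ∈ Icc (-1) 1) : 0 ≤ exDensity t y := by
  unfold exDensity
  split_ifs with ht'
  · calc
      0 ≤ (1 - 3 * t) * (1 - y) + 3 * t * (1 + y) :=
        add_nonneg (mul_nonneg (by linarith) (by linarith [hy.2]))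
          (mul_nonneg (by linarith) (by linarith [hy.1]))
      _ = 1 - y + 6 * t * y := by ring
  · exact zero_le_one

lemma eqOn_exDensity_uIoc_zero_one_third (y : ℝ) :
    EqOn (fun t ↦ 1 - y + 6 * t * y) (exDensity · y) (uIoc 0 (1 / 3)) := by
  intro t ht
  rw [uIoc_of_le (by norm_num)] at ht
  exact (if_pos ht.2).symm

lemma eqOn_exDensity_uIoc_one_third_one (y : ℝ) :
    EqOn (fun _ ↦ 1) (exDensity · y) (uIoc (1 / 3) 1) := by
  intro t ht
  rw [uIoc_of_le (by norm_num)] at ht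
  exact (if_neg ht.1.not_ge).symm

lemma intervalIntegrable_exDensity_zero_one_third (y : ℝ) :
    IntervalIntegrable (exDensity · y) volume 0 (1 / 3) :=
  (Continuous.intervalIntegrable (by fun_prop) _ _).congr (eqOn_exDensity_uIoc_zero_one_third y)

lemma intervalIntegrable_exDensity_one_third_one (y : ℝ) :
    IntervalIntegrable (exDensity · y) volume (1 / 3) 1 :=
  (Continuous.intervalIntegrable (by fun_prop) _ _).congr (eqOn_exDensity_uIoc_one_third_one y)

lemma intervalIntegrable_exDensity (y : ℝ) : IntervalIntegrable (exDensity · y) volume 0 1 :=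
  (intervalIntegrable_exDensity_zero_one_third y).trans
    (intervalIntegrable_exDensity_one_third_one y)

lemma integral_mul_exDensity {g : ℝ → ℝ} (hg : ContinuousOn g (Icc 0 1)) (y : ℝ) :
    ∫ t in (0 : ℝ)..1, g t * exDensity t y =
      (∫ t in (0 : ℝ)..(1 / 3), g t * (1 - y + 6 * t * y)) + ∫ t in (1 / 3 : ℝ)..1, g t := by
  have hg_left : ContinuousOn g (uIcc 0 (1 / 3)) :=
    hg.mono (uIcc_of_le (by norm_num : (0 : ℝ) ≤ 1 / 3) ▸ Icc_subset_Icc_right (by norm_num))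
  have hg_right : ContinuousOn g (uIcc (1 / 3) 1) :=
    hg.mono (uIcc_of_le (by norm_num : (1 / 3 : ℝ) ≤ 1) ▸ Icc_subset_Icc_left (by norm_num))
  rw [← integral_add_adjacent_intervals
    ((intervalIntegrable_exDensity_zero_one_third y).continuousOn_mul hg_left)
    ((intervalIntegrable_exDensity_one_third_one y).continuousOn_mul hg_right)]
  congr 1
  · refine integral_congr_ae (.of_forall fun t ht ↦ ?_)
    exact congrArg (g t * ·) (eqOn_exDensity_uIoc_zero_one_third y ht).symm
  · refine integral_congr_ae (.of_forall fun t ht ↦ ?_)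
    simpa only [mul_one] using congrArg (g t * ·) (eqOn_exDensity_uIoc_one_third_one y ht).symm

lemma integral_affine (p q l r : ℝ) :
    ∫ t in l..r, (p + q * t) = p * (r - l) + q * ((r ^ 2 - l ^ 2) / 2) := by
  rw [integral_add (Continuous.intervalIntegrable (by fun_prop) _ _)
    (Continuous.intervalIntegrable (by fun_prop) _ _), intervalIntegral.integral_const,
    intervalIntegral.integral_const_mul, integral_id, smul_eq_mul]
  ring

lemma integral_exDensity_zero_one_third (y : ℝ) :
    ∫ t in (0 : ℝ)..(1 / 3), (1 - y + 6 * t * y) = 1 / 3 := by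
  calc
    _ = ∫ t in (0 : ℝ)..(1 / 3), (1 - y + 6 * y * t) := by simp only [mul_right_comm]
    _ = 1 / 3 := by rw [integral_affine]; ring

lemma integral_exDensity (y : ℝ) : ∫ t in (0 : ℝ)..1, exDensity t y = 1 := by
  calc
    _ = ∫ t in (0 : ℝ)..1, 1 * exDensity t y := by simp only [one_mul]
    _ = 1 / 3 + ∫ _ in (1 / 3 : ℝ)..1, (1 : ℝ) := by
      rw [integral_mul_exDensity continuousOn_const]
      simp only [one_mul, integral_exDensity_zero_one_third]
    _ = 1 := by norm_num

lemma expectedProfit_exDensity_min_one_third (I y : ℝ) :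
    expectedProfit 0 1 (exDensity · y) I (min · (1 / 3)) = 2 / 9 - I := by
  have h_left : ∫ t in (0 : ℝ)..(1 / 3), (t - I - min t (1 / 3)) * (1 - y + 6 * t * y) =
      -I * (1 / 3) := by
    calc
      _ = ∫ t in (0 : ℝ)..(1 / 3), -I * (1 - y + 6 * t * y) := by
        refine intervalIntegral.integral_congr fun t ht ↦ ?_
        rw [uIcc_of_le (by norm_num)] at ht
        simp only [min_eq_left ht.2, sub_right_comm t I, sub_self, zero_sub]
      _ = -I * (1 / 3) := by
        rw [intervalIntegral.integral_const_mul, integral_exDensity_zero_one_third]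
  have h_right : ∫ t in (1 / 3 : ℝ)..1, (t - I - min t (1 / 3)) = 2 / 9 - I * (2 / 3) := by
    calc
      _ = ∫ t in (1 / 3 : ℝ)..1, (-(I + 1 / 3) + 1 * t) := by
        refine intervalIntegral.integral_congr fun t ht ↦ ?_
        rw [uIcc_of_le (by norm_num)] at ht
        simp only [min_eq_right ht.1]
        ring
      _ = 2 / 9 - I * (2 / 3) := by rw [integral_affine]; ring
  rw [expectedProfit, integral_mul_exDensity (by fun_prop), h_left, h_right]
  ring

end ExDensity

theorem example_breakeven_bid_bounds_general {I y : ℝ} (hI₀ : 0 < I) (hI₁ : I < 2 / 9)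
    (hy : y ∈ Icc (-1) 1) :
    (∀ b : ℝ, (∫ t in (0 : ℝ)..1, (t - I - min t b) * exDensity t y) = 0 → 1 / 3 < b) ∧
    (∀ b : ℝ, (∫ t in (0 : ℝ)..1, (t - I - b * t) * exDensity t y) = 0 → b < 1) := by
  have hf_nonneg : ∀ t ∈ Icc (0 : ℝ) 1, 0 ≤ exDensity t y := fun t ht ↦ exDensity_nonneg ht.1 hy
  refine ⟨fun b hb ↦ lt_of_not_ge fun hle ↦ ?_, fun b hb ↦ lt_of_not_ge fun hle ↦ ?_⟩
  · have h : expectedProfit 0 1 (exDensity · y) I (min · (1 / 3)) ≤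
        expectedProfit 0 1 (exDensity · y) I (min · b) :=
      expectedProfit_le_expectedProfit zero_le_one (intervalIntegrable_exDensity y) hf_nonneg
        (by fun_prop) (by fun_prop) (fun t _ ↦ min_le_min_left t hle) I
    rw [expectedProfit_exDensity_min_one_third, expectedProfit, hb] at h
    linarith
  · have h : expectedProfit 0 1 (exDensity · y) I (b * ·) ≤
        expectedProfit 0 1 (exDensity · y) I id :=
      expectedProfit_le_expectedProfit zero_le_one (intervalIntegrable_exDensity y) hf_nonneg
        (by fun_prop) (by fun_prop) (fun t ht ↦ le_mul_of_one_le_left ht.1 hle) I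
    rw [expectedProfit_id, integral_exDensity, expectedProfit, hb] at h
    linarith

/-- Bounds on the break-even bids in Example 4.1 for `0 < I < 2/9`:
(i) the break-even debt bid exceeds `1/3`; (ii) the break-even equity bid is below `1`. -/
theorem example_breakeven_bid_bounds
    (I : ℝ) (hI₀ : 0 < I) (hI₁ : I < 2/9)
    (y : ℝ) (hy : y ∈ Set.Icc (0:ℝ) 1) :
    (∀ b ∈ Set.Icc (0:ℝ) 1,
      (∫ t in (0:ℝ)..1, (t - I - min t b) * exDensity t y) = 0 → 1/3 < b) ∧
    (∀ b : ℝ,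
      (∫ t in (0:ℝ)..1, (t - I - b * t) * exDensity t y) = 0 → b < 1) :=
  have h := example_breakeven_bid_bounds_general hI₀ hI₁ (Icc_subset_Icc_left (by norm_num) hy)
  ⟨fun b _ ↦ h.1 b, h.2⟩
end

section
/- For y ∈ [0,1], define f(x, y) = 1 − y + 6xy for 0 ≤ x ≤ 1/3 and f(x, y) = 1 for 1/3 < x ≤ 1. Fix I with 0 < I < 2/9 and signals y₁, y₂ with 0 ≤ y₂ < y₁ ≤ 1. Suppose bᵉ ∈ [0,1] satisfies ∫₀¹ ( t − I − bᵉ·t ) f(t, y₂) dt = 0 and b^d ∈ [0,1] satisfies ∫₀¹ ( t − I − min(t, b^d) ) f(t, y₂) dt = 0. Then ∫₀¹ bᵉ·t · f(t, y₁) dt < ∫₀¹ min(t, b^d) · f(t, y₁) dt; that is, the seller's expected revenue from the debt security strictly exceeds that from the equity security. -/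
/-!
The density is affine in the signal, `f(t, y) = 1 + y g(t)` with `g(t) = 6t - 1` on `[0, 1/3]` and
`g = 0` elsewhere, so the expected payoff of a security is affine in `y`, with slope given by its
values on `[0, 1/3]` alone. Two securities that both break even at `y₂` have the same expected
payoff there, hence at `y₁ > y₂` the one with the larger slope raises more. Since `I < 2/9`, the
break-even debt level exceeds `1/3`, so debt pays out the whole value on `[0, 1/3]`, whereas
equity pays out only a fraction `bᵉ < 1` of it.
-/

open MeasureTheory intervalIntegral

/-- The expected payoff of the security paying `s t` at value `t`, for the signal `y`. -/
noncomputable def expectedPayoff (s : ℝ → ℝ) (y : ℝ) : ℝ :=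
  ∫ t in (0 : ℝ)..1, s t * exDensity t y

/-- The slope of the expected payoff of the security `s` as a function of the signal; beyond
`1 / 3` the density does not depend on the signal. -/
noncomputable def signalSensitivity (s : ℝ → ℝ) : ℝ :=
  ∫ t in (0 : ℝ)..(1 / 3), s t * (6 * t - 1)

/-- The equity security: the seller receives the share `b` of the value `t`. -/
def equityPayoff (b t : ℝ) : ℝ := b * t

/-- The debt security: the seller receives the value `t` up to the face value `b`. -/
def debtPayoff (b t : ℝ) : ℝ := min t b

section

variable {I b y : ℝ} {r s : ℝ → ℝ}

lemma integral_min_const {a b c : ℝ} (hab : a ≤ b) (hbc : b ≤ c) :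
    ∫ t in a..c, min t b = (b ^ 2 - a ^ 2) / 2 + (c - b) * b := by
  have hmin (u v : ℝ) : IntervalIntegrable (fun t ↦ min t b) volume u v :=
    (by fun_prop : Continuous fun t ↦ min t b).intervalIntegrable u v
  have hleft : ∫ t in a..b, min t b = ∫ t in a..b, t :=
    integral_congr fun t ht ↦ min_eq_left (Set.uIcc_of_le hab ▸ ht).2
  have hright : ∫ t in b..c, min t b = ∫ _ in b..c, b :=
    integral_congr fun t ht ↦ min_eq_right (Set.uIcc_of_le hbc ▸ ht).1
  rw [← integral_add_adjacent_intervals (hmin a b) (hmin b c), hleft, hright, integral_id,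
    intervalIntegral.integral_const, smul_eq_mul]

lemma exDensity_eq_one_add (x y : ℝ) :
    exDensity x y = 1 + y * {t | t ≤ 1 / 3}.indicator (fun t ↦ 6 * t - 1) x := by
  simp only [exDensity, Set.indicator_apply, Set.mem_ofPred_eq]
  split_ifs <;> ring

lemma exDensity_nonneg_s15 {x : ℝ} (hx : 0 ≤ x) (hy : y ∈ Set.Icc (-1) 1) : 0 ≤ exDensity x y := by
  unfold exDensity
  split_ifs with hx'
  · -- A convex combination of `1 - y` and `1 + y`, the values at the endpoints of `[0, 1 / 3]`.
    calc
      0 ≤ (1 - 3 * x) * (1 - y) + 3 * x * (1 + y) :=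
        add_nonneg (mul_nonneg (by linarith) (by linarith [hy.2]))
          (mul_nonneg (by linarith) (by linarith [hy.1]))
      _ = 1 - y + 6 * x * y := by ring
  · exact zero_le_one

lemma intervalIntegrable_indicator_mul (hs : IntervalIntegrable s volume 0 1) :
    IntervalIntegrable ({t | t ≤ 1 / 3}.indicator fun t ↦ s t * (6 * t - 1)) volume 0 1 := by
  have hmul : IntervalIntegrable (fun t ↦ s t * (6 * t - 1)) volume 0 1 :=
    hs.mul_continuousOn (by fun_prop)
  rw [intervalIntegrable_iff] at hmul ⊢
  exact hmul.indicator measurableSet_Iic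

lemma mul_exDensity (s : ℝ → ℝ) (t y : ℝ) :
    s t * exDensity t y = s t + y * {t | t ≤ 1 / 3}.indicator (fun t ↦ s t * (6 * t - 1)) t := by
  rw [exDensity_eq_one_add, Set.indicator_mul_right]
  ring

lemma intervalIntegrable_mul_exDensity (hs : IntervalIntegrable s volume 0 1) (y : ℝ) :
    IntervalIntegrable (fun t ↦ s t * exDensity t y) volume 0 1 := by
  simp only [mul_exDensity]
  exact hs.add ((intervalIntegrable_indicator_mul hs).const_mul y)

lemma expectedPayoff_eq_integral_add (hs : IntervalIntegrable s volume 0 1) (y : ℝ) :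
    expectedPayoff s y = (∫ t in (0 : ℝ)..1, s t) + y * signalSensitivity s := by
  simp only [expectedPayoff, mul_exDensity]
  rw [intervalIntegral.integral_add hs ((intervalIntegrable_indicator_mul hs).const_mul y),
    intervalIntegral.integral_const_mul,
    intervalIntegral.integral_indicator (by norm_num), signalSensitivity]

lemma expectedPayoff_sub (hr : IntervalIntegrable r volume 0 1)
    (hs : IntervalIntegrable s volume 0 1) (y : ℝ) :
    expectedPayoff (fun t ↦ r t - s t) y = expectedPayoff r y - expectedPayoff s y := by
  simp only [expectedPayoff, sub_mul]
  exact intervalIntegral.integral_sub (intervalIntegrable_mul_exDensity hr y)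
    (intervalIntegrable_mul_exDensity hs y)

lemma expectedPayoff_mono (hr : IntervalIntegrable r volume 0 1)
    (hs : IntervalIntegrable s volume 0 1) (hrs : ∀ t ∈ Set.Icc (0 : ℝ) 1, r t ≤ s t)
    (hy : y ∈ Set.Icc (-1) 1) : expectedPayoff r y ≤ expectedPayoff s y :=
  integral_mono_on zero_le_one (intervalIntegrable_mul_exDensity hr y)
    (intervalIntegrable_mul_exDensity hs y) fun t ht ↦
      mul_le_mul_of_nonneg_right (hrs t ht) (exDensity_nonneg_s15 ht.1 hy)

lemma expectedPayoff_lt_of_signalSensitivity_lt {y₁ y₂ : ℝ} (hr : IntervalIntegrable r volume 0 1)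
    (hs : IntervalIntegrable s volume 0 1) (hrs : signalSensitivity r < signalSensitivity s)
    (heq : expectedPayoff r y₂ = expectedPayoff s y₂) (hy : y₂ < y₁) :
    expectedPayoff r y₁ < expectedPayoff s y₁ := by
  have hslope : (y₁ - y₂) * signalSensitivity r < (y₁ - y₂) * signalSensitivity s :=
    mul_lt_mul_of_pos_left hrs (sub_pos.2 hy)
  rw [expectedPayoff_eq_integral_add hr, expectedPayoff_eq_integral_add hs] at heq ⊢
  linarith

lemma expectedPayoff_const (c y : ℝ) : expectedPayoff (fun _ ↦ c) y = c := by
  have hslope : ∫ t in (0 : ℝ)..(1 / 3), (6 * t - 1) = 0 := by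
    rw [intervalIntegral.integral_sub (intervalIntegrable_id.const_mul 6) intervalIntegrable_const,
      intervalIntegral.integral_const_mul, integral_id, intervalIntegral.integral_const]
    norm_num
  rw [expectedPayoff_eq_integral_add intervalIntegrable_const, signalSensitivity,
    intervalIntegral.integral_const_mul, hslope]
  simp

lemma equityPayoff_one : equityPayoff 1 = fun t ↦ t := funext one_mul

lemma intervalIntegrable_equityPayoff (b u v : ℝ) :
    IntervalIntegrable (equityPayoff b) volume u v :=
  intervalIntegrable_id.const_mul b

lemma intervalIntegrable_debtPayoff (b u v : ℝ) : IntervalIntegrable (debtPayoff b) volume u v :=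
  (continuous_id.min continuous_const).intervalIntegrable u v

lemma signalSensitivity_equityPayoff (b : ℝ) : signalSensitivity (equityPayoff b) = b / 54 := by
  have hexpand (t : ℝ) : equityPayoff b t * (6 * t - 1) = b * (6 * t ^ 2 - t) := by
    rw [equityPayoff]
    ring
  simp only [signalSensitivity, hexpand]
  rw [intervalIntegral.integral_const_mul, intervalIntegral.integral_sub (by simp) (by simp),
    intervalIntegral.integral_const_mul, integral_pow, integral_id]
  push_cast
  ring

lemma signalSensitivity_debtPayoff (hb : 1 / 3 ≤ b) :
    signalSensitivity (debtPayoff b) = 1 / 54 := by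
  rw [← signalSensitivity_equityPayoff 1, equityPayoff_one]
  refine integral_congr fun t ht ↦ ?_
  rw [Set.uIcc_of_le (by norm_num)] at ht
  simp only [debtPayoff, min_eq_left (ht.2.trans hb)]

lemma expectedPayoff_equityPayoff (b y : ℝ) :
    expectedPayoff (equityPayoff b) y = b * (1 / 2 + y / 54) := by
  have huniform : ∫ t in (0 : ℝ)..1, equityPayoff b t = b / 2 :=
    (intervalIntegral.integral_const_mul b fun t ↦ t).trans (by rw [integral_id]; ring)
  rw [expectedPayoff_eq_integral_add (intervalIntegrable_equityPayoff b 0 1),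
    signalSensitivity_equityPayoff, huniform]
  ring

lemma expectedPayoff_debtPayoff (hb : b ∈ Set.Icc (1 / 3) 1) (y : ℝ) :
    expectedPayoff (debtPayoff b) y = b - b ^ 2 / 2 + y / 54 := by
  rw [expectedPayoff_eq_integral_add (intervalIntegrable_debtPayoff b 0 1),
    signalSensitivity_debtPayoff hb.1]
  simp only [debtPayoff]
  rw [integral_min_const (by linarith [hb.1]) hb.2]
  ring

lemma expectedPayoff_debtPayoff_mono (hy : y ∈ Set.Icc (-1) 1) :
    Monotone fun b ↦ expectedPayoff (debtPayoff b) y := fun b c hbc ↦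
  expectedPayoff_mono (intervalIntegrable_debtPayoff b 0 1) (intervalIntegrable_debtPayoff c 0 1)
    (fun t _ ↦ min_le_min_left t hbc) hy

lemma expectedPayoff_of_breakEven (hs : IntervalIntegrable s volume 0 1)
    (h : expectedPayoff (fun t ↦ t - I - s t) y = 0) :
    expectedPayoff s y = 1 / 2 + y / 54 - I := by
  have hvalue : expectedPayoff (fun t ↦ t) y = 1 / 2 + y / 54 := by
    rw [← equityPayoff_one, expectedPayoff_equityPayoff, one_mul]
  rw [expectedPayoff_sub (intervalIntegrable_id.sub intervalIntegrable_const) hs,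
    expectedPayoff_sub intervalIntegrable_id intervalIntegrable_const,
    hvalue, expectedPayoff_const] at h
  linarith

lemma lt_one_of_equityPayoff_breakEven (hI : 0 < I) (hy : -1 ≤ y)
    (h : expectedPayoff (fun t ↦ t - I - equityPayoff b t) y = 0) : b < 1 := by
  have hpayoff := expectedPayoff_of_breakEven (intervalIntegrable_equityPayoff b 0 1) h
  rw [expectedPayoff_equityPayoff] at hpayoff
  have hmean : 0 < 1 / 2 + y / 54 := by linarith
  exact (mul_lt_iff_lt_one_left hmean).1 (by linarith)

lemma one_third_lt_of_debtPayoff_breakEven (hI : I < 2 / 9) (hy : y ∈ Set.Icc (-1) 1)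
    (h : expectedPayoff (fun t ↦ t - I - debtPayoff b t) y = 0) : 1 / 3 < b := by
  refine (expectedPayoff_debtPayoff_mono hy).reflect_lt ?_
  -- At face value `1 / 3` the residual claim `max (t - 1 / 3) 0` has expectation `2 / 9`.
  rw [expectedPayoff_debtPayoff (by norm_num),
    expectedPayoff_of_breakEven (intervalIntegrable_debtPayoff b 0 1) h]
  linarith

end

/-- The signals may range over `[-1, 1]`, the whole interval on which `exDensity · y` is a
probability density. -/
theorem example_debt_beats_equity_general {I y₁ y₂ be bd : ℝ} (hI₀ : 0 < I) (hI₁ : I < 2 / 9)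
    (hy₂ : -1 ≤ y₂) (hy : y₂ < y₁) (hy₁ : y₁ ≤ 1)
    (heqe : expectedPayoff (fun t ↦ t - I - equityPayoff be t) y₂ = 0)
    (heqd : expectedPayoff (fun t ↦ t - I - debtPayoff bd t) y₂ = 0) :
    expectedPayoff (equityPayoff be) y₁ < expectedPayoff (debtPayoff bd) y₁ := by
  have hequity := intervalIntegrable_equityPayoff be 0 1
  have hdebt := intervalIntegrable_debtPayoff bd 0 1
  have hbe : be < 1 := lt_one_of_equityPayoff_breakEven hI₀ hy₂ heqe
  have hbd : 1 / 3 < bd := one_third_lt_of_debtPayoff_breakEven hI₁ ⟨hy₂, hy.le.trans hy₁⟩ heqd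
  refine expectedPayoff_lt_of_signalSensitivity_lt hequity hdebt ?_ ?_ hy
  · rw [signalSensitivity_equityPayoff, signalSensitivity_debtPayoff hbd.le]
    linarith
  · rw [expectedPayoff_of_breakEven hequity heqe, expectedPayoff_of_breakEven hdebt heqd]

/-- Proposition 4.1 (revenue-ranking reversal): in Example 4.1, with `0 < I < 2/9` and signals
`y₂ < y₁`, if `bᵉ` and `b^d` are the break-even equity and debt bids at the signal `y₂`, then
the seller's expected revenue from the debt security strictly exceeds that from the equity
security. -/
theorem example_debt_beats_equity
    (I : ℝ) (hI₀ : 0 < I) (hI₁ : I < 2/9)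
    (y₁ y₂ : ℝ) (hy₂ : 0 ≤ y₂) (hy : y₂ < y₁) (hy₁ : y₁ ≤ 1)
    (be bd : ℝ) (hbe : be ∈ Set.Icc (0:ℝ) 1) (hbd : bd ∈ Set.Icc (0:ℝ) 1)
    (heqe : (∫ t in (0:ℝ)..1, (t - I - be * t) * exDensity t y₂) = 0)
    (heqd : (∫ t in (0:ℝ)..1, (t - I - min t bd) * exDensity t y₂) = 0) :
    (∫ t in (0:ℝ)..1, be * t * exDensity t y₁)
      < ∫ t in (0:ℝ)..1, min t bd * exDensity t y₁ := by
  exact example_debt_beats_equity_general hI₀ hI₁ (by linarith) hy hy₁ heqe heqd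
end

section
/- Let x̄ > 0, b' ∈ [0,1], and b̂ ∈ [0, x̄]. Then the function g : [0, x̄] → ℝ defined by g(w) = b'·w − min(w, b̂) is quasi-monotone: for all w, ŵ ∈ [0, x̄] with w > ŵ, g(ŵ) > 0 implies g(w) ≥ 0. -/
/-! Equity pays a linear function of the realized value, debt a concave one that is nonnegative
at `0`. Their difference is therefore convex and nonpositive at `0`, and once such a function is
positive it has risen above its initial value, so by convexity it never decreases again. -/

theorem concaveOn_min_const {𝕜 β : Type*} [Semiring 𝕜] [PartialOrder 𝕜] [AddCommMonoid β]
    [LinearOrder β] [IsOrderedAddMonoid β] [Module 𝕜 β] [PosSMulStrictMono 𝕜 β] {s : Set β}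
    (hs : Convex 𝕜 s) (c : β) : ConcaveOn 𝕜 s fun w => min w c :=
  (concaveOn_id hs).inf (concaveOn_const c hs)

theorem convexOn_mul_left_sub {𝕜 : Type*} [CommRing 𝕜] [PartialOrder 𝕜] [IsOrderedAddMonoid 𝕜]
    {s : Set 𝕜} {S : 𝕜 → 𝕜} (hS : ConcaveOn 𝕜 s S) (b : 𝕜) :
    ConvexOn 𝕜 s fun w => b * w - S w :=
  ((LinearMap.mulLeft 𝕜 b).convexOn hS.1).sub hS

section LinearOrderedField

variable {𝕜 : Type*} [Field 𝕜] [LinearOrder 𝕜] [IsStrictOrderedRing 𝕜] {s : Set 𝕜}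

theorem lt_of_convexOn_of_left_le_of_lt {β : Type*} [AddCommMonoid β] [LinearOrder β]
    [IsOrderedCancelAddMonoid β] [Module 𝕜 β] [PosSMulStrictMono 𝕜 β] {f : 𝕜 → β}
    (hf : ConvexOn 𝕜 s f) {x y z : 𝕜} (hx : x ∈ s) (hz : z ∈ s) (hxy : x ≤ y) (hyz : y ≤ z)
    {t : β} (hfx : f x ≤ t) (hfy : t < f y) : t < f z := by
  have hrise : f x < f y := hfx.trans_lt hfy
  have hxy' : x < y := hxy.lt_of_ne (ne_of_apply_ne f hrise.ne)
  exact hfy.trans_le (hf.le_right_of_left_le'' hx hz hxy' hyz hrise.le)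

theorem equity_steeper_than_debt_general {S : 𝕜 → 𝕜} (hS : ConcaveOn 𝕜 s S) (h0 : 0 ∈ s)
    (hS0 : 0 ≤ S 0) (b : 𝕜) {w what : 𝕜} (hw : w ∈ s) (hwhat : 0 ≤ what) (hle : what ≤ w)
    (hpos : 0 < b * what - S what) : 0 < b * w - S w := by
  have hnonpos : b * 0 - S 0 ≤ 0 := by simpa using hS0
  exact lt_of_convexOn_of_left_le_of_lt (convexOn_mul_left_sub hS b) h0 hw hwhat hle hnonpos hpos

end LinearOrderedField

/-- Equity is steeper than debt: for an equity bid `b' ∈ [0,1]` and a debt bid `b̂ ∈ [0,x̄]`,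
the difference `w ↦ b'·w − min(w, b̂)` is quasi-monotone on `[0, x̄]`. -/
theorem equity_steeper_than_debt
    (xbar : ℝ) (hxbar : 0 < xbar)
    (b' : ℝ) (hb' : b' ∈ Set.Icc (0:ℝ) 1)
    (bhat : ℝ) (hbhat : bhat ∈ Set.Icc (0:ℝ) xbar) :
    ∀ w ∈ Set.Icc (0:ℝ) xbar, ∀ what ∈ Set.Icc (0:ℝ) xbar, what < w →
      0 < b' * what - min what bhat → 0 ≤ b' * w - min w bhat :=
  fun _ hw _ hwhat hlt hpos =>
    (equity_steeper_than_debt_general (concaveOn_min_const (convex_Icc 0 xbar) bhat)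
      (Set.left_mem_Icc.2 hxbar.le) (le_min le_rfl hbhat.1) b' hw hwhat.1 hlt.le hpos).le
end
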